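/- arXiv:1511.05384 — 11 statements merged into one kernel-verified Lean document; each statement's English description precedes it below -/
import Mathlib

section
/- Let C_n denote the cycle graph on n vertices (n ≥ 3) and let k be an integer with 1 ≤ k ≤ n. Then ψ_k(C_n) = ⌈n/k⌉. -/
/-- `S` is a `k`-path vertex cover of `G`: every path in `G` on `k` vertices
(i.e. whose support has `k` vertices) contains at least one vertex of `S`. -/
def SimpleGraph.IsPathVertexCover {V : Type*} (G : SimpleGraph V) (k : ℕ) (S : Set V) : Prop :=
  ∀ ⦃u w : V⦄ (p : G.Walk u w), p.IsPath → p.support.length = k → ∃ x ∈ p.support, x ∈ S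

/-- `ψ_k(G)`: the minimum cardinality of a `k`-path vertex cover of `G`. -/
noncomputable def SimpleGraph.pathNum {V : Type*} [Fintype V] (G : SimpleGraph V) (k : ℕ) : ℕ :=
  sInf {m : ℕ | ∃ S : Finset V, G.IsPathVertexCover k ↑S ∧ S.card = m}

namespace SimpleGraph

lemma cycleGraph_adj_iff_val {n : ℕ} (hn : 2 ≤ n) {u v : Fin n} :
    (cycleGraph n).Adj u v ↔ u.val + 1 = v.val ∨ v.val + 1 = u.val ∨
      (u.val = 0 ∧ v.val + 1 = n) ∨ (v.val = 0 ∧ u.val + 1 = n) := by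
  have mod_eq_one {a b : ℕ} (ha : a < n) (hb : b < n) :
      (n - b + a) % n = 1 ↔ b + 1 = a ∨ (a = 0 ∧ b + 1 = n) := by
    rcases le_or_gt b a with h | h
    · rw [show n - b + a = (a - b) + n by omega, Nat.add_mod_right, Nat.mod_eq_of_lt (by omega)]
      omega
    · rw [Nat.mod_eq_of_lt (by omega)]
      omega
  rw [cycleGraph_adj', Fin.sub_def, Fin.sub_def, mod_eq_one u.isLt v.isLt,
    mod_eq_one v.isLt u.isLt]
  omega

/-- From every vertex of a cycle there is a path going once in the positive direction, of any
length less than that of the cycle. -/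
lemma exists_isPath_cycleGraph {n : ℕ} (hn : 2 ≤ n) (l : ℕ) (hl : l < n) (v : Fin n) :
    ∃ (w : Fin n) (p : (cycleGraph n).Walk v w), p.IsPath ∧ p.length = l ∧
      ∀ x ∈ p.support, ∃ i ≤ l, v.val + i = x.val ∨ v.val + i = x.val + n := by
  induction l generalizing v with
  | zero => exact ⟨v, .nil, by simp, rfl, by simp⟩
  | succ l ih =>
    obtain ⟨v', hv'⟩ : ∃ v' : Fin n, v.val + 1 = v'.val ∨ (v'.val = 0 ∧ v.val + 1 = n) := by
      by_cases h : v.val + 1 < n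
      · exact ⟨⟨v.val + 1, h⟩, Or.inl rfl⟩
      · exact ⟨⟨0, by omega⟩, Or.inr ⟨rfl, by omega⟩⟩
    obtain ⟨w, p, hp, hlen, hsupp⟩ := ih (by omega) v'
    have hadj : (cycleGraph n).Adj v v' := by
      rw [cycleGraph_adj_iff_val hn]
      omega
    refine ⟨w, .cons hadj p, ?_, by simp [hlen], ?_⟩
    · rw [Walk.cons_isPath_iff]
      refine ⟨hp, fun hv => ?_⟩
      obtain ⟨i, hi, h⟩ := hsupp v hv
      omega
    · intro x hx
      rw [Walk.support_cons, List.mem_cons] at hx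
      rcases hx with rfl | hx
      · exact ⟨0, by omega, Or.inl rfl⟩
      · obtain ⟨i, hi, h⟩ := hsupp x hx
        by_cases hwrap : v.val + 1 = v'.val
        · exact ⟨i + 1, by omega, by omega⟩
        · have := x.isLt
          exact ⟨i + 1, by omega, by omega⟩

lemma IsPathVertexCover.le_card_mul {n k : ℕ} (hn : 2 ≤ n) (hk1 : 1 ≤ k) (hk2 : k ≤ n)
    {S : Finset (Fin n)} (hS : (cycleGraph n).IsPathVertexCover k S) : n ≤ S.card * k := by
  let shift : Fin n × ℕ → Fin n := fun a => ⟨(a.1.val + n - a.2) % n, Nat.mod_lt _ (by omega)⟩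
  have hcover : (Finset.univ : Finset (Fin n)) ⊆ (S ×ˢ Finset.range k).image shift := by
    intro v _
    obtain ⟨w, p, hp, hlen, hsupp⟩ := exists_isPath_cycleGraph hn (k - 1) (by omega) v
    obtain ⟨x, hx, hxS⟩ := hS p hp (by rw [Walk.length_support, hlen]; omega)
    obtain ⟨i, hi, h⟩ := hsupp x hx
    refine Finset.mem_image.2 ⟨(x, i), ?_, Fin.ext ?_⟩
    · exact Finset.mem_product.2 ⟨hxS, Finset.mem_range.2 (by omega)⟩
    · change (x.val + n - i) % n = v.val
      rcases h with h | h
      · rw [show x.val + n - i = v.val + n by omega, Nat.add_mod_right, Nat.mod_eq_of_lt v.isLt]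
      · rw [show x.val + n - i = v.val by omega, Nat.mod_eq_of_lt v.isLt]
  calc n = (Finset.univ : Finset (Fin n)).card := (Finset.card_fin n).symm
    _ ≤ ((S ×ˢ Finset.range k).image shift).card := Finset.card_le_card hcover
    _ ≤ (S ×ˢ Finset.range k).card := Finset.card_image_le
    _ = S.card * k := by rw [Finset.card_product, Finset.card_range]

/-- A walk in a cycle that avoids the multiples of `k` stays between two consecutive ones. -/
lemma Walk.div_eq_of_mem_support_cycleGraph {n k : ℕ} (hn : 2 ≤ n) {u w : Fin n}
    (p : (cycleGraph n).Walk u w) (hp : ∀ x ∈ p.support, ¬ k ∣ x.val) :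
    ∀ x ∈ p.support, x.val / k = u.val / k := by
  induction p with
  | nil => simp
  | @cons u v w hadj p ih =>
    intro x hx
    have hu : ¬ k ∣ u.val := hp u (by simp)
    have hv : ¬ k ∣ v.val := hp v (by simp)
    have huv : v.val / k = u.val / k := by
      rw [cycleGraph_adj_iff_val hn] at hadj
      rcases hadj with h | h | ⟨h, -⟩ | ⟨h, -⟩
      · rw [← h] at hv ⊢
        exact Nat.succ_div_of_not_dvd hv
      · rw [← h] at hu ⊢
        exact (Nat.succ_div_of_not_dvd hu).symm
      · exact absurd (h ▸ dvd_zero k) hu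
      · exact absurd (h ▸ dvd_zero k) hv
    rw [support_cons, List.mem_cons] at hx
    rcases hx with rfl | hx
    · rfl
    · rw [ih (fun y hy => hp y (by simp [hy])) x hx, huv]

lemma isPathVertexCover_cycleGraph_dvd {n k : ℕ} (hn : 2 ≤ n) (hk : 1 ≤ k) :
    (cycleGraph n).IsPathVertexCover k {v | k ∣ v.val} := by
  intro u w p hp hlen
  by_contra! havoid
  have hdiv := p.div_eq_of_mem_support_cycleGraph hn havoid
  have hmaps : ∀ x ∈ p.support.toFinset, x.val % k ∈ (Finset.range k).erase 0 := by
    intro x hx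
    rw [List.mem_toFinset] at hx
    exact Finset.mem_erase.2 ⟨fun h => havoid x hx (Nat.dvd_of_mod_eq_zero h),
      Finset.mem_range.2 (Nat.mod_lt _ hk)⟩
  have hinj : Set.InjOn (fun x : Fin n => x.val % k) p.support.toFinset := by
    intro x hx y hy hxy
    rw [Finset.mem_coe, List.mem_toFinset] at hx hy
    apply Fin.ext
    rw [← Nat.div_add_mod x.val k, ← Nat.div_add_mod y.val k, hdiv x hx, hdiv y hy]
    exact congrArg _ hxy
  have hcard := Finset.card_le_card_of_injOn _ hmaps hinj
  rw [List.toFinset_card_of_nodup hp.support_nodup, hlen,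
    Finset.card_erase_of_mem (Finset.mem_range.2 hk), Finset.card_range] at hcard
  omega

lemma card_filter_dvd_val_le {n k : ℕ} (hk : 1 ≤ k) :
    (Finset.univ.filter fun v : Fin n => k ∣ v.val).card ≤ (n + k - 1) / k := by
  rw [← Finset.card_range ((n + k - 1) / k)]
  refine Finset.card_le_card_of_injOn (fun v => v.val / k) ?_ ?_
  · intro v _
    have := v.isLt
    refine Finset.mem_coe.2 (Finset.mem_range.2 ?_)
    calc v.val / k < (v.val + k) / k := by rw [Nat.add_div_right _ hk]; omega
      _ ≤ (n + k - 1) / k := Nat.div_le_div_right (by omega)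
  · intro x hx y hy hxy
    simp only [Finset.coe_filter, Finset.mem_univ, true_and, Set.mem_ofPred_eq] at hx hy
    exact Fin.ext ((Nat.div_left_inj hx hy).1 hxy)

end SimpleGraph

theorem psi_cycleGraph (n k : ℕ) (hn : 3 ≤ n) (hk1 : 1 ≤ k) (hk2 : k ≤ n) :
    (SimpleGraph.cycleGraph n).pathNum k = (n + k - 1) / k := by
  have hn2 : 2 ≤ n := by omega
  have hcover : (SimpleGraph.cycleGraph n).IsPathVertexCover k
      ↑(Finset.univ.filter fun v : Fin n => k ∣ v.val) := by
    simpa using SimpleGraph.isPathVertexCover_cycleGraph_dvd hn2 hk1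
  apply le_antisymm
  · refine le_trans ?_ (SimpleGraph.card_filter_dvd_val_le hk1)
    exact Nat.sInf_le ⟨_, hcover, rfl⟩
  · refine le_csInf ⟨_, _, hcover, rfl⟩ ?_
    rintro m ⟨S, hS, rfl⟩
    have := hS.le_card_mul hn2 hk1 hk2
    rw [← Nat.lt_succ_iff, Nat.div_lt_iff_lt_mul hk1, Nat.succ_mul]
    omega
end

section
/- Let a, b be positive integers and let K_{a,b} denote the complete bipartite graph with parts of sizes a and b. For any integer k with 1 ≤ k ≤ a + b: ψ_k(K_{a,b}) = a + b if k = 1; ψ_k(K_{a,b}) = min{a,b} − ⌊k/2⌋ + 1 if 1 < k ≤ 2·min{a,b} + 1; and ψ_k(K_{a,b}) = 0 otherwise. -/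
open Finset

namespace SimpleGraph

variable {α β : Type*}

/-- The two sides of a complete bipartite graph alternate along a path, starting with the side of
its first vertex. -/
theorem Walk.IsPath.card_toLeft_toRight_completeBipartiteGraph [DecidableEq α] [DecidableEq β]
    {u w : α ⊕ β} (p : (completeBipartiteGraph α β).Walk u w) (hp : p.IsPath) :
    (u.isLeft → #p.support.toFinset.toRight ≤ #p.support.toFinset.toLeft ∧
      #p.support.toFinset.toLeft ≤ #p.support.toFinset.toRight + 1) ∧
    (u.isRight → #p.support.toFinset.toLeft ≤ #p.support.toFinset.toRight ∧
      #p.support.toFinset.toRight ≤ #p.support.toFinset.toLeft + 1) := by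
  induction p with
  | @nil u =>
    have hl : (∅ : Finset (α ⊕ β)).toLeft = ∅ := by ext; simp
    have hr : (∅ : Finset (α ⊕ β)).toRight = ∅ := by ext; simp
    rcases u with x | y <;>
      simp only [Walk.support_nil, List.toFinset_cons, List.toFinset_nil, toLeft_insert_inl,
        toRight_insert_inl, toLeft_insert_inr, toRight_insert_inr] <;> simp [hl, hr]
  | @cons u v w h p ih =>
    obtain ⟨hp, hu⟩ := (Walk.cons_isPath_iff h p).1 hp
    have ih := ih hp
    rcases u with x | y <;> rcases v with x' | y' <;> simp at h
    · have hx : x ∉ p.support.toFinset.toLeft := by simpa using hu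
      simp only [Walk.support_cons, List.toFinset_cons, toLeft_insert_inl, toRight_insert_inl,
        card_insert_of_notMem hx]
      simp at ih ⊢
      omega
    · have hy : y ∉ p.support.toFinset.toRight := by simpa using hu
      simp only [Walk.support_cons, List.toFinset_cons, toLeft_insert_inr, toRight_insert_inr,
        card_insert_of_notMem hy]
      simp at ih ⊢
      omega

/-- A path on `k` vertices in a complete bipartite graph has at least `k / 2` vertices on each
side. -/
theorem Walk.IsPath.half_le_card_completeBipartiteGraph [DecidableEq α] [DecidableEq β]
    {u w : α ⊕ β} (p : (completeBipartiteGraph α β).Walk u w) (hp : p.IsPath) :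
    p.support.length / 2 ≤ #p.support.toFinset.toLeft ∧
      p.support.length / 2 ≤ #p.support.toFinset.toRight := by
  have h := Walk.IsPath.card_toLeft_toRight_completeBipartiteGraph p hp
  have hlen := List.toFinset_card_of_nodup hp.support_nodup
  have hsum := card_toLeft_add_card_toRight (u := p.support.toFinset)
  rcases u with x | y <;> simp only [Sum.isLeft, Sum.isRight] at h <;> simp at h <;> omega

/-- A vertex set that leaves fewer than `k / 2` vertices on one side of a complete bipartite graph
is a `k`-path vertex cover. -/
theorem isPathVertexCover_completeBipartiteGraph [Fintype α] [Fintype β] {k : ℕ}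
    (S : Finset (α ⊕ β))
    (hS : Fintype.card α < k / 2 + #S.toLeft ∨ Fintype.card β < k / 2 + #S.toRight) :
    (completeBipartiteGraph α β).IsPathVertexCover k S := by
  classical
  intro u w p hp hk
  by_contra! hdisj
  have hhalf := Walk.IsPath.half_le_card_completeBipartiteGraph p hp
  have hleft : Disjoint p.support.toFinset.toLeft S.toLeft :=
    Finset.disjoint_left.2 fun x hx hxS => hdisj _ (by simpa using hx) (by simpa using hxS)
  have hright : Disjoint p.support.toFinset.toRight S.toRight :=
    Finset.disjoint_left.2 fun x hx hxS => hdisj _ (by simpa using hx) (by simpa using hxS)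
  have hl := card_le_univ (p.support.toFinset.toLeft ∪ S.toLeft)
  have hr := card_le_univ (p.support.toFinset.toRight ∪ S.toRight)
  rw [card_union_of_disjoint hleft] at hl
  rw [card_union_of_disjoint hright] at hr
  omega

/-- In a complete bipartite graph there are paths on `k + 1` vertices starting on either side inside
any vertex set that has enough vertices on both sides. -/
theorem exists_isPath_completeBipartiteGraph (k : ℕ) (A : Finset α) (B : Finset β) :
    ((k + 2) / 2 ≤ #A → (k + 1) / 2 ≤ #B →
      ∃ x w, ∃ p : (completeBipartiteGraph α β).Walk (.inl x) w, p.IsPath ∧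
        p.support.length = k + 1 ∧ ∀ v ∈ p.support, v ∈ A.disjSum B) ∧
    ((k + 1) / 2 ≤ #A → (k + 2) / 2 ≤ #B →
      ∃ y w, ∃ p : (completeBipartiteGraph α β).Walk (.inr y) w, p.IsPath ∧
        p.support.length = k + 1 ∧ ∀ v ∈ p.support, v ∈ A.disjSum B) := by
  classical
  induction k generalizing A B with
  | zero =>
    constructor
    · intro hA _
      obtain ⟨x, hx⟩ := card_pos.1 (show 0 < #A by omega)
      exact ⟨x, _, .nil, by simp [hx]⟩
    · intro _ hB
      obtain ⟨y, hy⟩ := card_pos.1 (show 0 < #B by omega)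
      exact ⟨y, _, .nil, by simp [hy]⟩
  | succ k ih =>
    constructor
    · intro hA hB
      obtain ⟨x, hx⟩ := card_pos.1 (show 0 < #A by omega)
      have hcard := card_erase_of_mem hx
      obtain ⟨y, w, p, hp, hlen, hsub⟩ := (ih (A.erase x) B).2 (by omega) (by omega)
      refine ⟨x, w, .cons (by simp) p, ?_, by simpa using hlen, ?_⟩
      · exact (Walk.cons_isPath_iff _ p).2 ⟨hp, fun h => by simpa using hsub _ h⟩
      · intro v hv
        rcases List.mem_cons.1 (by simpa only [Walk.support_cons] using hv) with rfl | hv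
        · simpa using hx
        · exact disjSum_mono (erase_subset x A) subset_rfl (hsub v hv)
    · intro hA hB
      obtain ⟨y, hy⟩ := card_pos.1 (show 0 < #B by omega)
      have hcard := card_erase_of_mem hy
      obtain ⟨x, w, p, hp, hlen, hsub⟩ := (ih A (B.erase y)).1 (by omega) (by omega)
      refine ⟨y, w, .cons (by simp) p, ?_, by simpa using hlen, ?_⟩
      · exact (Walk.cons_isPath_iff _ p).2 ⟨hp, fun h => by simpa using hsub _ h⟩
      · intro v hv
        rcases List.mem_cons.1 (by simpa only [Walk.support_cons] using hv) with rfl | hv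
        · simpa using hy
        · exact disjSum_mono subset_rfl (erase_subset y B) (hsub v hv)

/-- A `k`-path vertex cover of a complete bipartite graph leaves no room for an alternating path on
`k` vertices. -/
theorem IsPathVertexCover.card_lt_of_completeBipartiteGraph [Fintype α] [Fintype β]
    {k : ℕ} (hk : 1 ≤ k) {S : Finset (α ⊕ β)}
    (hS : (completeBipartiteGraph α β).IsPathVertexCover k S) :
    Fintype.card α < k / 2 + #S.toLeft ∨ Fintype.card β < k / 2 + #S.toRight ∨
      Fintype.card α + Fintype.card β < k + #S := by
  classical
  obtain ⟨k, rfl⟩ := Nat.exists_eq_add_of_le' hk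
  by_contra! h
  have hA := card_add_card_compl S.toLeft
  have hB := card_add_card_compl S.toRight
  have hsum := card_toLeft_add_card_toRight (u := S)
  have havoid : ∀ v ∈ S.toLeftᶜ.disjSum S.toRightᶜ, v ∉ S := by
    rintro (x | y) hv <;> simpa using hv
  have hpath := exists_isPath_completeBipartiteGraph k S.toLeftᶜ S.toRightᶜ
  by_cases hc : (k + 2) / 2 ≤ #S.toLeftᶜ
  · obtain ⟨x, w, p, hp, hlen, hsub⟩ := hpath.1 hc (by omega)
    obtain ⟨v, hv, hvS⟩ := hS p hp hlen
    exact havoid v (hsub v hv) hvS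
  · obtain ⟨y, w, p, hp, hlen, hsub⟩ := hpath.2 (by omega) (by omega)
    obtain ⟨v, hv, hvS⟩ := hS p hp hlen
    exact havoid v (hsub v hv) hvS

theorem pathNum_eq_card {V : Type*} [Fintype V] {G : SimpleGraph V} {k : ℕ} {S : Finset V}
    (hS : G.IsPathVertexCover k S)
    (hmin : ∀ T : Finset V, G.IsPathVertexCover k T → #S ≤ #T) : G.pathNum k = #S :=
  le_antisymm (Nat.sInf_le ⟨S, hS, rfl⟩)
    (le_csInf ⟨_, S, hS, rfl⟩ (by rintro _ ⟨T, hT, rfl⟩; exact hmin T hT))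

theorem pathNum_one {V : Type*} [Fintype V] (G : SimpleGraph V) :
    G.pathNum 1 = Fintype.card V := by
  refine pathNum_eq_card (S := univ) (fun u w p _ _ => ⟨u, by simp⟩) fun T hT => card_le_card ?_
  intro v _
  simpa using hT (.nil : G.Walk v v) .nil (by simp)

end SimpleGraph

open SimpleGraph in
theorem psi_completeBipartiteGraph (a b : ℕ) (ha : 1 ≤ a) (hb : 1 ≤ b)
    (k : ℕ) (hk1 : 1 ≤ k) (hk2 : k ≤ a + b) :
    (k = 1 → (completeBipartiteGraph (Fin a) (Fin b)).pathNum k = a + b) ∧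
    (1 < k → k ≤ 2 * min a b + 1 →
      (completeBipartiteGraph (Fin a) (Fin b)).pathNum k = min a b - k / 2 + 1) ∧
    (2 * min a b + 1 < k → (completeBipartiteGraph (Fin a) (Fin b)).pathNum k = 0) := by
  refine ⟨?_, fun hk hkm => ?_, fun hk => ?_⟩
  · rintro rfl
    simp [pathNum_one]
  · obtain ⟨S, hS, hcard⟩ : ∃ S : Finset (Fin a ⊕ Fin b),
        (completeBipartiteGraph (Fin a) (Fin b)).IsPathVertexCover k S ∧
          #S = min a b - k / 2 + 1 := by
      rcases le_total a b with hab | hab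
      · obtain ⟨T, -, hT⟩ := exists_subset_card_eq (s := (univ : Finset (Fin a)))
          (n := min a b - k / 2 + 1) (by rw [card_univ, Fintype.card_fin]; omega)
        refine ⟨T.disjSum ∅, isPathVertexCover_completeBipartiteGraph _ (.inl ?_), by simp [hT]⟩
        rw [toLeft_disjSum, Fintype.card_fin]
        omega
      · obtain ⟨T, -, hT⟩ := exists_subset_card_eq (s := (univ : Finset (Fin b)))
          (n := min a b - k / 2 + 1) (by rw [card_univ, Fintype.card_fin]; omega)
        refine ⟨(∅ : Finset (Fin a)).disjSum T,
          isPathVertexCover_completeBipartiteGraph _ (.inr ?_), by simp [hT]⟩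
        rw [toRight_disjSum, Fintype.card_fin]
        omega
    rw [← hcard]
    refine pathNum_eq_card hS fun T hT => ?_
    have hlt := hT.card_lt_of_completeBipartiteGraph hk1
    have hsum := card_toLeft_add_card_toRight (u := T)
    simp only [Fintype.card_fin] at hlt
    omega
  · have hcover : (completeBipartiteGraph (Fin a) (Fin b)).IsPathVertexCover k
        (∅ : Finset (Fin a ⊕ Fin b)) := by
      apply isPathVertexCover_completeBipartiteGraph
      simp only [Fintype.card_fin]
      omega
    simpa using pathNum_eq_card hcover (by simp)
end

section
/- Let k be a positive integer. For every finite simple graph H = (W,F) there exists a finite simple graph G containing W among its vertices such that the subgraph of G induced on W is isomorphic to H and W is a k-path vertex cover of G of minimum cardinality (i.e., W is a k-PVC of G and ψ_k(G) = |W|). -/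
namespace SimpleGraph

/-- The graph obtained from `H` by enlarging every vertex `w` to a clique on `n + 1` vertices, of
which only `(w, 0)` is joined to vertices outside the clique. -/
def cliqueExtension {W : Type*} (H : SimpleGraph W) (n : ℕ) : SimpleGraph (W × Fin (n + 1)) where
  Adj x y := (x.1 = y.1 ∧ x.2 ≠ y.2) ∨ (x.2 = 0 ∧ y.2 = 0 ∧ H.Adj x.1 y.1)
  symm := ⟨by
    rintro x y (⟨h₁, h₂⟩ | ⟨h₁, h₂, h₃⟩)
    · exact Or.inl ⟨h₁.symm, h₂.symm⟩
    · exact Or.inr ⟨h₂, h₁, h₃.symm⟩⟩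
  loopless := ⟨by
    rintro x (⟨-, h⟩ | ⟨-, -, h⟩)
    · exact h rfl
    · exact H.irrefl h⟩

theorem exists_walk_support_eq_map_range {V : Type*} (G : SimpleGraph V) (g : ℕ → V) (n : ℕ)
    (h : ∀ i < n, G.Adj (g i) (g (i + 1))) :
    ∃ p : G.Walk (g 0) (g n), p.support = (List.range (n + 1)).map g := by
  induction n with
  | zero => exact ⟨Walk.nil, by simp⟩
  | succ n ih =>
    obtain ⟨p, hp⟩ := ih fun i hi => h i (by omega)
    refine ⟨p.concat (h n (by omega)), ?_⟩
    rw [Walk.support_concat, hp, List.range_succ (n := n + 1)]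
    simp

variable {W : Type*} (H : SimpleGraph W) (n : ℕ)

/-- The embedding of the vertices of `H` into its clique extension. -/
def cliqueExtensionBase (W : Type*) (n : ℕ) : W ↪ W × Fin (n + 1) :=
  ⟨fun w => (w, 0), fun _ _ h => congrArg Prod.fst h⟩

theorem nonempty_iso_induce_cliqueExtension :
    Nonempty (H ≃g (H.cliqueExtension n).induce (Set.range (cliqueExtensionBase W n))) :=
  ⟨⟨Equiv.ofInjective _ (cliqueExtensionBase W n).injective, by
    intro a b
    change (H.cliqueExtension n).Adj (a, 0) (b, 0) ↔ H.Adj a b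
    simp [cliqueExtension]⟩⟩

theorem fst_eq_of_mem_support_cliqueExtension {u v : W × Fin (n + 1)}
    (p : (H.cliqueExtension n).Walk u v) (hp : ∀ x ∈ p.support, x.2 ≠ 0) :
    ∀ x ∈ p.support, x.1 = u.1 := by
  induction p with
  | nil => simp
  | cons h p ih =>
    simp only [Walk.support_cons, List.mem_cons, forall_eq_or_imp] at hp ⊢
    obtain ⟨h₀, hp⟩ := hp
    refine ⟨trivial, fun x hx => (ih hp x hx).trans ?_⟩
    rcases h with ⟨h, -⟩ | ⟨h, -⟩
    · exact h.symm
    · exact absurd h h₀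

theorem isPathVertexCover_cliqueExtension_range :
    (H.cliqueExtension n).IsPathVertexCover (n + 1) (Set.range (cliqueExtensionBase W n)) := by
  classical
  intro u v p hp hlen
  by_contra! hcon
  have hne : ∀ x ∈ p.support, x.2 ≠ 0 := fun x hx h0 => hcon x hx ⟨x.1, Prod.ext rfl h0.symm⟩
  have hfst := H.fst_eq_of_mem_support_cliqueExtension n p hne
  have hsub : p.support.toFinset ⊆
      (Finset.univ : Finset (Fin n)).image fun i => (u.1, i.succ) := by
    intro x hx
    rw [List.mem_toFinset] at hx
    obtain ⟨i, hi⟩ := Fin.exists_succ_eq.2 (hne x hx)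
    exact Finset.mem_image.2 ⟨i, Finset.mem_univ _, Prod.ext (hfst x hx).symm hi⟩
  have hcard := (Finset.card_le_card hsub).trans Finset.card_image_le
  rw [List.toFinset_card_of_nodup hp.support_nodup, hlen, Finset.card_fin] at hcard
  omega

theorem IsPathVertexCover.exists_mem_fst_eq {H : SimpleGraph W} {n : ℕ}
    {S : Set (W × Fin (n + 1))} (hS : (H.cliqueExtension n).IsPathVertexCover (n + 1) S) (w : W) :
    ∃ x ∈ S, x.1 = w := by
  have hinj : ∀ i < n + 1, ∀ j < n + 1, Fin.ofNat (n + 1) i = Fin.ofNat (n + 1) j → i = j := by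
    intro i hi j hj h
    simpa [Fin.ext_iff, Nat.mod_eq_of_lt hi, Nat.mod_eq_of_lt hj] using h
  obtain ⟨p, hp⟩ := (H.cliqueExtension n).exists_walk_support_eq_map_range
    (fun i => (w, Fin.ofNat (n + 1) i)) n fun i hi => Or.inl
      ⟨rfl, fun h => by have := hinj i (by omega) (i + 1) (by omega) h; omega⟩
  have hpath : p.IsPath := by
    rw [Walk.isPath_def, hp]
    refine List.Nodup.map_on (fun i hi j hj h => ?_) List.nodup_range
    exact hinj i (List.mem_range.1 hi) j (List.mem_range.1 hj) (congrArg Prod.snd h)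
  obtain ⟨x, hx, hxS⟩ := hS p hpath (by simp [hp])
  rw [hp] at hx
  obtain ⟨i, -, rfl⟩ := List.mem_map.1 hx
  exact ⟨_, hxS, rfl⟩

theorem pathNum_cliqueExtension [Fintype W] :
    (H.cliqueExtension n).pathNum (n + 1) = Fintype.card W := by
  have hbase : Fintype.card W ∈ {m : ℕ | ∃ S : Finset (W × Fin (n + 1)),
      (H.cliqueExtension n).IsPathVertexCover (n + 1) ↑S ∧ S.card = m} :=
    ⟨Finset.univ.map (cliqueExtensionBase W n), by
      simpa using H.isPathVertexCover_cliqueExtension_range n, by simp⟩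
  refine le_antisymm (Nat.sInf_le hbase) (le_csInf ⟨_, hbase⟩ ?_)
  rintro m ⟨S, hS, rfl⟩
  exact Finset.card_le_card_of_surjOn Prod.fst fun w _ => hS.exists_mem_fst_eq w

end SimpleGraph

theorem exists_supergraph_min_pvc (k : ℕ) (hk : 1 ≤ k) (W : Type) [Fintype W]
    (H : SimpleGraph W) :
    ∃ (V : Type) (instV : Fintype V) (G : SimpleGraph V) (f : W ↪ V),
      Nonempty (H ≃g G.induce (Set.range f)) ∧
      G.IsPathVertexCover k (Set.range f) ∧
      @SimpleGraph.pathNum V instV G k = Fintype.card W := by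
  obtain ⟨n, rfl⟩ := Nat.exists_eq_add_of_le' hk
  exact ⟨W × Fin (n + 1), inferInstance, H.cliqueExtension n, SimpleGraph.cliqueExtensionBase W n,
    H.nonempty_iso_induce_cliqueExtension n, H.isPathVertexCover_cliqueExtension_range n,
    H.pathNum_cliqueExtension n⟩
end

section
/- Let G be a finite simple graph and let m, k be integers with 1 ≤ m < k. If ψ_k(G) > 0, then ψ_m(G) ≥ ψ_k(G) + ⌊k/m⌋ − 1. -/
/-- A path on at least `q * m` vertices meets an `m`-path vertex cover in at least `q` vertices. -/
theorem SimpleGraph.IsPathVertexCover.le_countP_support {V : Type*} [DecidableEq V]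
    {G : SimpleGraph V} {m : ℕ} {S : Finset V} (hS : G.IsPathVertexCover m ↑S) (hm : 1 ≤ m)
    (q : ℕ) {u w : V} (p : G.Walk u w) (hp : p.IsPath) (hq : q * m ≤ p.support.length) :
    q ≤ p.support.countP (· ∈ S) := by
  induction q generalizing u with
  | zero => exact Nat.zero_le _
  | succ q ih =>
    rw [Nat.succ_mul] at hq
    have h_take : (p.take (m - 1)).support = p.support.take m := by
      rw [SimpleGraph.Walk.support_take, Nat.sub_add_cancel hm]
    obtain ⟨x, hx, hxS⟩ := hS (p.take (m - 1)) (hp.take _) (by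
      rw [h_take, List.length_take]; omega)
    have h_first : 0 < (p.support.take m).countP (· ∈ S) :=
      List.countP_pos_iff.2 ⟨x, h_take ▸ hx, by simpa using hxS⟩
    have h_rest : q ≤ (p.support.drop m).countP (· ∈ S) := by
      rcases Nat.eq_zero_or_pos q with rfl | hq_pos
      · exact Nat.zero_le _
      · have h_len : m ≤ p.length := by
          have := Nat.le_mul_of_pos_left m hq_pos
          rw [SimpleGraph.Walk.length_support] at hq
          omega
        have h_drop : (p.drop m).support = p.support.drop m := by
          rw [SimpleGraph.Walk.drop_support_eq_support_drop_min, min_eq_left h_len]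
        rw [← h_drop]
        refine ih (p.drop m) (hp.drop _) ?_
        rw [h_drop, List.length_drop]
        omega
    rw [← List.take_append_drop m p.support, List.countP_append]
    omega

/-- `ψ_k(G)` is at most the cardinality of any `k`-path vertex cover. -/
theorem SimpleGraph.IsPathVertexCover.pathNum_le {V : Type*} [Fintype V] {G : SimpleGraph V}
    {k : ℕ} {S : Finset V} (hS : G.IsPathVertexCover k ↑S) : G.pathNum k ≤ S.card :=
  Nat.sInf_le ⟨S, hS, rfl⟩

/-- The minimum defining `ψ_k(G)` is attained. -/
theorem SimpleGraph.exists_isPathVertexCover_card_eq_pathNum {V : Type*} [Fintype V]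
    (G : SimpleGraph V) (k : ℕ) :
    ∃ S : Finset V, G.IsPathVertexCover k ↑S ∧ S.card = G.pathNum k :=
  Nat.sInf_mem (s := {m : ℕ | ∃ S : Finset V, G.IsPathVertexCover k ↑S ∧ S.card = m})
    ⟨_, Finset.univ, fun u _ p _ _ => ⟨u, p.start_mem_support, by simp⟩, rfl⟩

/-- A duplicate-free list has at most `S.card` entries in `S`. -/
theorem List.Nodup.countP_mem_le_card {α : Type*} [DecidableEq α] {l : List α} (hl : l.Nodup)
    (S : Finset α) : l.countP (· ∈ S) ≤ S.card := by
  rw [List.countP_eq_length_filter, ← List.toFinset_card_of_nodup (hl.filter _)]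
  exact Finset.card_le_card fun x hx => by
    simpa using (List.mem_filter.1 (List.mem_toFinset.1 hx)).2

theorem psi_m_ge_psi_k {V : Type*} [Fintype V] (G : SimpleGraph V)
    (m k : ℕ) (hm : 1 ≤ m) (hmk : m < k) (hpos : 0 < G.pathNum k) :
    G.pathNum m ≥ G.pathNum k + k / m - 1 := by
  classical
  obtain ⟨S, hS, hS_card⟩ := G.exists_isPathVertexCover_card_eq_pathNum m
  have h_div_pos : 0 < k / m := Nat.div_pos hmk.le hm
  have h_count {u w : V} (p : G.Walk u w) (hp : p.IsPath) (hpk : p.support.length = k) :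
      k / m ≤ p.support.countP (· ∈ S) :=
    hS.le_countP_support hm _ p hp (hpk ▸ Nat.div_mul_le_self _ _)
  have h_card : k / m ≤ S.card := by
    by_contra h_lt
    have h_empty : G.IsPathVertexCover k ↑(∅ : Finset V) := fun u w p hp hpk =>
      absurd ((h_count p hp hpk).trans (hp.support_nodup.countP_mem_le_card S)) h_lt
    simpa using hpos.trans_le h_empty.pathNum_le
  obtain ⟨R, hRS, hR_card⟩ := Finset.exists_subset_card_eq (show k / m - 1 ≤ S.card by omega)
  have h_cover : G.IsPathVertexCover k ↑(S \ R) := by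
    intro u w p hp hpk
    by_contra! h_miss
    have h_mono : p.support.countP (· ∈ S) ≤ p.support.countP (· ∈ R) :=
      List.countP_mono_left fun x hx hxS => by
        have := h_miss x hx
        simp_all
    have := (h_count p hp hpk).trans (h_mono.trans (hp.support_nodup.countP_mem_le_card R))
    omega
  have h_le := h_cover.pathNum_le
  rw [Finset.card_sdiff_of_subset hRS] at h_le
  omega
end

section
/- Let m, k be integers with 1 ≤ m < k, and let p_k, p_m be integers satisfying p_k > 0 and p_m ≥ p_k + ⌊k/m⌋ − 1. Then there exists a connected finite simple graph G such that ψ_k(G) = p_k and ψ_m(G) = p_m. -/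
namespace SimpleGraph

section PathVertexCover

variable {V : Type*} {G : SimpleGraph V}

/-- An `n`-path vertex cover meets every path given as an injective sequence of `n` vertices. -/
theorem IsPathVertexCover.exists_mem_of_injective {n : ℕ} {S : Set V}
    (hS : G.IsPathVertexCover n S) (hn : 0 < n) (f : Fin n → V) (hf : Function.Injective f)
    (hadj : ∀ (i : ℕ) (hi : i + 1 < n), G.Adj (f ⟨i, by omega⟩) (f ⟨i + 1, hi⟩)) :
    ∃ i, f i ∈ S := by
  have hne : List.ofFn f ≠ [] := by simpa [List.ofFn_eq_nil_iff] using hn.ne'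
  have hch : (List.ofFn f).IsChain G.Adj := List.isChain_ofFn.2 hadj
  obtain ⟨x, hx, hxS⟩ := hS (Walk.ofSupport _ hne hch)
    (by rw [Walk.isPath_def, Walk.support_ofSupport]; exact List.nodup_ofFn.2 hf)
    (by simp [Walk.support_ofSupport])
  rw [Walk.support_ofSupport, List.mem_ofFn] at hx
  obtain ⟨i, rfl⟩ := hx
  exact ⟨i, hxS⟩

/-- A function preserved by adjacency outside `S` is constant along walks avoiding `S`. -/
theorem Walk.apply_eq_of_avoids {α : Type*} {S : Set V} (f : V → α)
    (hf : ∀ x y, x ∉ S → y ∉ S → G.Adj x y → f x = f y) {u w : V} (p : G.Walk u w)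
    (hp : ∀ x ∈ p.support, x ∉ S) : ∀ x ∈ p.support, f x = f u := by
  induction p with
  | nil => simp
  | cons h p ih =>
    intro x hx
    rw [Walk.support_cons, List.mem_cons] at hx
    rcases hx with rfl | hx
    · rfl
    · rw [ih (fun y hy => hp y (by simp [hy])) x hx]
      exact (hf _ _ (hp _ (by simp)) (hp _ (by simp)) h).symm

/-- If `f` is preserved by adjacency outside `S` and `g` separates the fibres of `f` outside `S`
while taking fewer than `n` values there, then `S` is an `n`-path vertex cover. -/
theorem isPathVertexCover_of_fibres {α : Type*} {n : ℕ} {S : Set V} (f : V → α) (g : V → ℕ)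
    (hn : 0 < n) (hf : ∀ x y, x ∉ S → y ∉ S → G.Adj x y → f x = f y)
    (hg : ∀ x y, x ∉ S → y ∉ S → f x = f y → g x = g y → x = y)
    (hlt : ∀ x, x ∉ S → g x + 1 < n) : G.IsPathVertexCover n S := by
  intro u w p hp hlen
  by_contra! hS
  have hconst := p.apply_eq_of_avoids f hf hS
  have hnodup : (p.support.map g).Nodup := by
    refine (List.nodup_map_iff_inj_on hp.support_nodup).2 fun x hx y hy hxy => ?_
    exact hg x y (hS x hx) (hS y hy) ((hconst x hx).trans (hconst y hy).symm) hxy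
  have hsub : p.support.map g ⊆ List.range (n - 1) := by
    intro i hi
    obtain ⟨x, hx, rfl⟩ := List.mem_map.1 hi
    have := hlt x (hS x hx)
    exact List.mem_range.2 (by omega)
  have := (hnodup.subperm hsub).length_le
  simp only [List.length_map, List.length_range] at this
  omega

theorem pathNum_eq_of_forall_le [Fintype V] {n a : ℕ} (S : Finset V)
    (hS : G.IsPathVertexCover n (S : Set V)) (hcard : S.card ≤ a)
    (hle : ∀ T : Finset V, G.IsPathVertexCover n (T : Set V) → a ≤ T.card) :
    G.pathNum n = a := by
  refine le_antisymm (le_trans (Nat.sInf_le ⟨S, hS, rfl⟩) hcard) (le_csInf ⟨_, S, hS, rfl⟩ ?_)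
  rintro _ ⟨T, hT, rfl⟩
  exact hle T hT

end PathVertexCover

section HubForest

variable {U C : Type} {len : C → ℕ}

/-- The join of the complete graph on the hubs `U` and a disjoint union of paths, the path
indexed by `c` having `len c` vertices. -/
def hubForest (U : Type) {C : Type} (len : C → ℕ) :
    SimpleGraph (U ⊕ (Σ c, Fin (len c))) where
  Adj x y := x ≠ y ∧ ∀ a b, x = .inr a → y = .inr b →
    a.1 = b.1 ∧ (a.2.val + 1 = b.2.val ∨ b.2.val + 1 = a.2.val)
  symm := ⟨fun _ _ h => ⟨h.1.symm, fun a b ha hb => by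
    obtain ⟨h₁, h₂⟩ := h.2 b a hb ha
    exact ⟨h₁.symm, h₂.symm⟩⟩⟩
  loopless := ⟨fun _ h => h.1 rfl⟩

theorem hubForest_connected [Nonempty U] : (hubForest U len).Connected := by
  obtain ⟨u⟩ := ‹Nonempty U›
  have h : ∀ x, (hubForest U len).Reachable (.inl u) x := by
    intro x
    by_cases hx : Sum.inl u = x
    · exact hx ▸ Reachable.refl _
    · exact Adj.reachable ⟨hx, by simp⟩
  exact connected_iff _ |>.2 ⟨fun x y => (h x).symm.trans (h y), ⟨.inl u⟩⟩

theorem sigma_fin_ext {a b : Σ c, Fin (len c)} (h₁ : a.1 = b.1) (h₂ : a.2.val = b.2.val) :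
    a = b := by
  obtain ⟨c, i⟩ := a
  obtain ⟨d, j⟩ := b
  obtain rfl : c = d := h₁
  exact congrArg _ (Fin.ext h₂)

/-- Given a sequence of forest vertices and holes, a cover leaves fewer hubs than there are
positions of the sequence which are holes or covered: otherwise hubs fill these positions. -/
theorem IsPathVertexCover.card_hubs_lt {n : ℕ} {S : Set (U ⊕ (Σ c, Fin (len c)))}
    (hS : (hubForest U len).IsPathVertexCover n S) (hn : 0 < n)
    (h : Fin n → Option (Σ c, Fin (len c)))
    [Fintype {u : U // Sum.inl u ∉ S}] [Fintype {i // ∀ a, h i = some a → Sum.inr a ∈ S}]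
    (hinj : ∀ i j a, h i = some a → h j = some a → i = j)
    (hadj : ∀ (i : ℕ) (hi : i + 1 < n), ∀ a b, h ⟨i, by omega⟩ = some a →
      h ⟨i + 1, hi⟩ = some b → a.1 = b.1 ∧ a.2.val + 1 = b.2.val) :
    Fintype.card {u : U // Sum.inl u ∉ S} <
      Fintype.card {i // ∀ a, h i = some a → Sum.inr a ∈ S} := by
  by_contra! hle
  obtain ⟨e⟩ := Function.Embedding.nonempty_of_card_le hle
  have hex : ∀ i, ∃ x : U ⊕ (Σ c, Fin (len c)), x ∉ S ∧
      ((∃ a, h i = some a ∧ x = .inr a) ∨ ∃ hi, x = .inl (e ⟨i, hi⟩).1) := by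
    intro i
    by_cases hi : ∀ a, h i = some a → Sum.inr a ∈ S
    · exact ⟨_, (e ⟨i, hi⟩).2, .inr ⟨hi, rfl⟩⟩
    · push Not at hi
      obtain ⟨a, ha, haS⟩ := hi
      exact ⟨_, haS, .inl ⟨a, ha, rfl⟩⟩
  choose f hfS hf using hex
  have hfinj : Function.Injective f := by
    intro i j hij
    rcases hf i with ⟨a, ha, hfa⟩ | ⟨hi, hfi⟩ <;> rcases hf j with ⟨b, hb, hfb⟩ | ⟨hj, hfj⟩
    · rw [hfa, hfb, Sum.inr.injEq] at hij
      exact hinj i j a ha (hij ▸ hb)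
    · rw [hfa, hfj] at hij
      cases hij
    · rw [hfi, hfb] at hij
      cases hij
    · rw [hfi, hfj, Sum.inl.injEq] at hij
      simpa using e.injective (Subtype.ext hij)
  obtain ⟨i, hi⟩ := hS.exists_mem_of_injective hn f hfinj fun i hi => by
    refine ⟨fun heq => by simpa using hfinj heq, fun a b ha hb => ?_⟩
    have hsome : ∀ j a, f j = .inr a → h j = some a := by
      intro j a hja
      rcases hf j with ⟨b, hb, hfb⟩ | ⟨hj, hfj⟩
      · rw [hfb, Sum.inr.injEq] at hja
        exact hja ▸ hb
      · rw [hfj] at hja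
        cases hja
    obtain ⟨h₁, h₂⟩ := hadj i hi a b (hsome _ _ ha) (hsome _ _ hb)
    exact ⟨h₁, .inl h₂⟩
  exact hfS i hi

/-- The hubs form an `n`-path vertex cover if all the paths have fewer than `n` vertices. -/
theorem isPathVertexCover_range_inl {n : ℕ} (hn : 0 < n) (hlen : ∀ c, len c < n) :
    (hubForest U len).IsPathVertexCover n (Set.range Sum.inl) := by
  refine isPathVertexCover_of_fibres (Sum.elim (fun _ => none) fun a => some a.1)
    (Sum.elim (fun _ => 0) fun a => a.2.val) hn ?_ ?_ ?_
  · rintro (u | a) (v | b) hx hy hxy <;> simp_all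
    exact (hxy.2 a b rfl rfl).1
  · rintro (u | a) (v | b) hx hy h₁ h₂ <;> simp_all
    exact sigma_fin_ext h₁ h₂
  · rintro (u | a) hx
    · simp at hx
    · have h₁ := hlen a.1
      have h₂ := a.2.isLt
      simp only [Sum.elim_inr]
      omega

/-- Hubs together with every `m`-th vertex of each path form an `m`-path vertex cover. -/
theorem isPathVertexCover_hubs_union {m : ℕ} (hm : 0 < m) :
    (hubForest U len).IsPathVertexCover m {x | ∀ a, x = Sum.inr a → m ∣ a.2.val + 1} := by
  have hmod : ∀ i : ℕ, ¬ m ∣ i + 1 → i % m + 1 < m := by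
    intro i hi
    have h := Nat.mod_lt i hm
    by_contra hlt
    refine hi ⟨i / m + 1, ?_⟩
    have := Nat.div_add_mod i m
    rw [Nat.mul_add]
    omega
  refine isPathVertexCover_of_fibres
    (Sum.elim (fun _ => none) fun a => some (a.1, a.2.val / m))
    (Sum.elim (fun _ => 0) fun a => a.2.val % m) hm ?_ ?_ ?_
  · rintro (u | a) (v | b) hx hy hxy <;> simp_all
    obtain ⟨h₁, h₂⟩ := hxy.2 a b rfl rfl
    refine ⟨h₁, ?_⟩
    rcases h₂ with h₂ | h₂
    · rw [← h₂]
      exact (Nat.succ_div_of_not_dvd hx).symm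
    · rw [← h₂]
      exact Nat.succ_div_of_not_dvd hy
  · rintro (u | a) (v | b) hx hy h₁ h₂ <;> simp_all
    refine sigma_fin_ext h₁.1 ?_
    rw [← Nat.div_add_mod a.2.val m, ← Nat.div_add_mod b.2.val m, h₁.2, h₂]
  · rintro (u | a) hx
    · simp at hx
    · exact hmod _ (by simpa using hx)

/-- An `m`-path vertex cover meets each block of `m` consecutive vertices of a path. -/
theorem exists_mem_block_of_isPathVertexCover {m : ℕ} (hm : 0 < m)
    {S : Set (U ⊕ (Σ c, Fin (len c)))} (hS : (hubForest U len).IsPathVertexCover m S)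
    (c : C) (j : Fin (len c / m)) :
    ∃ i : Fin (len c), i.val / m = j.val ∧ Sum.inr ⟨c, i⟩ ∈ S := by
  have hlt : ∀ i < m, m * j.val + i < len c := by
    intro i hi
    have h₁ : m * (j.val + 1) ≤ m * (len c / m) := Nat.mul_le_mul_left m j.isLt
    have h₂ := Nat.mul_div_le (len c) m
    rw [Nat.mul_add] at h₁
    omega
  obtain ⟨i, hi⟩ := hS.exists_mem_of_injective hm
    (fun i : Fin m => .inr ⟨c, m * j.val + i.val, hlt i i.isLt⟩)
    (by
      intro i i' h
      simp only [Sum.inr.injEq, Sigma.mk.injEq, heq_eq_eq, Fin.mk.injEq, true_and] at h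
      ext
      omega)
    (by
      intro i hi
      refine ⟨by simp, ?_⟩
      rintro a b ha hb
      cases ha
      cases hb
      simp
      omega)
  refine ⟨_, ?_, hi⟩
  simp [Nat.mul_add_div hm, Nat.div_eq_of_lt i.isLt]

variable [Fintype U] [Fintype C]

/-- If two of the paths are long enough to build an `n`-path through one hub, then every
`n`-path vertex cover has at least as many vertices as there are hubs. -/
theorem card_hubs_le_of_isPathVertexCover {n : ℕ} {c d : C} (hcd : c ≠ d)
    (hn : len c < n) (hlen : n ≤ len c + 1 + len d)
    (T : Finset (U ⊕ (Σ c, Fin (len c))))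
    (hT : (hubForest U len).IsPathVertexCover n (T : Set _)) : Fintype.card U ≤ T.card := by
  classical
  let h : Fin n → Option (Σ c, Fin (len c)) := fun i =>
    if h₁ : i.val < len c then some ⟨c, i.val, h₁⟩
    else if h₂ : i.val = len c then none
    else some ⟨d, i.val - len c - 1, by omega⟩
  have hinj : ∀ i j a, h i = some a → h j = some a → i = j := by
    intro i j a hi hj
    ext
    have h₁ : ∀ i, h i = some a → (a.1 = c ∧ a.2.val = i.val) ∨
        (a.1 = d ∧ a.2.val + len c + 1 = i.val) := by
      intro i hi
      simp only [h] at hi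
      split_ifs at hi with h₁ h₂ <;> cases hi
      · simp
      · right
        simp
        omega
    rcases h₁ i hi with ⟨_, _⟩ | ⟨_, _⟩ <;> rcases h₁ j hj with ⟨_, _⟩ | ⟨_, _⟩
    · omega
    · simp_all
    · simp_all
    · omega
  have key := hT.card_hubs_lt (by omega) h hinj (by
    intro i hi a b ha hb
    simp only [h] at ha hb
    split_ifs at ha hb <;> cases ha <;> cases hb <;> simp <;> omega)
  have hholes : Fintype.card {i // ∀ a, h i = some a → Sum.inr a ∈ (T : Set (U ⊕ _))} ≤
      Fintype.card (Option {a : Σ c, Fin (len c) // Sum.inr a ∈ (T : Set (U ⊕ _))}) := by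
    let g : {i // ∀ a, h i = some a → Sum.inr a ∈ (T : Set (U ⊕ _))} →
        Option {a : Σ c, Fin (len c) // Sum.inr a ∈ (T : Set (U ⊕ _))} := fun i =>
      (h i.1).pmap (fun a ha => ⟨a, ha⟩) i.2
    refine Fintype.card_le_of_injective g ?_
    rintro ⟨i, hi⟩ ⟨j, hj⟩ hij
    have hval : h i = h j := by
      have := congrArg (Option.map Subtype.val) hij
      simpa [g, Option.map_pmap] using this
    rw [Subtype.mk.injEq]
    rcases hhi : h i with _ | a
    · have hnone : ∀ i, h i = none → i.val = len c := by
        intro i hi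
        simp only [h] at hi
        split_ifs at hi
        assumption
      exact Fin.ext ((hnone i hhi).trans (hnone j (hval ▸ hhi)).symm)
    · exact hinj i j a hhi (hval ▸ hhi)
  have hsplit : Fintype.card {u : U // Sum.inl u ∈ (T : Set (U ⊕ Σ c, Fin (len c)))} +
      Fintype.card {a : Σ c, Fin (len c) // Sum.inr a ∈ (T : Set (U ⊕ _))} = T.card := by
    rw [← Fintype.card_sum, ← Fintype.card_coe T]
    exact (Fintype.card_congr Equiv.subtypeSum).symm
  have hcompl := Fintype.card_subtype_compl
    (fun u : U => Sum.inl u ∈ (T : Set (U ⊕ Σ c, Fin (len c))))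
  have hle := Fintype.card_subtype_le
    (fun u : U => Sum.inl u ∈ (T : Set (U ⊕ Σ c, Fin (len c))))
  rw [Fintype.card_option] at hholes
  omega

/-- If more than `T.card` of the paths have at least `m - 1` vertices, an `m`-path vertex cover
`T` contains all the hubs. -/
theorem inl_mem_of_isPathVertexCover {m : ℕ} (hm : 0 < m) {D : Finset C}
    (hD : ∀ d ∈ D, m ≤ len d + 1) (T : Finset (U ⊕ (Σ c, Fin (len c))))
    (hT : (hubForest U len).IsPathVertexCover m (T : Set _)) (hTD : T.card < D.card) (u : U) :
    Sum.inl u ∈ T := by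
  classical
  obtain ⟨d, hdD, hd⟩ : ∃ d ∈ D, ∀ i, Sum.inr ⟨d, i⟩ ∉ T := by
    by_contra! hcon
    choose i hi using hcon
    have : Function.Injective
        (fun d : D => (⟨.inr ⟨d.1, i d.1 d.2⟩, hi d.1 d.2⟩ : T)) := by
      rintro ⟨d, hd⟩ ⟨d', hd'⟩ hdd
      simp only [Subtype.mk.injEq, Sum.inr.injEq, Sigma.mk.injEq] at hdd
      exact Subtype.ext hdd.1
    have := Fintype.card_le_of_injective _ this
    simp only [Fintype.card_coe] at this
    omega
  have hdm := hD d hdD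
  let h : Fin m → Option (Σ c, Fin (len c)) := fun i =>
    if h₁ : i.val = 0 then none else some ⟨d, i.val - 1, by omega⟩
  have key := hT.card_hubs_lt hm h (by
    intro i j a hi hj
    simp only [h] at hi hj
    split_ifs at hi hj
    cases hi
    simp only [Option.some.injEq, Sigma.mk.injEq, heq_eq_eq, Fin.mk.injEq, true_and] at hj
    ext
    omega) (by
    intro i hi a b ha hb
    simp only [h] at ha hb
    split_ifs at ha hb
    cases ha
    cases hb
    simp
    omega)
  have hone : Fintype.card {i // ∀ a, h i = some a → Sum.inr a ∈ (T : Set (U ⊕ _))} ≤ 1 := by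
    have hzero : ∀ i, (∀ a, h i = some a → Sum.inr a ∈ (T : Set (U ⊕ _))) → i.val = 0 := by
      intro i hi
      by_contra hne
      exact hd _ (hi _ (dif_neg hne))
    refine Fintype.card_le_one_iff.2 ?_
    rintro ⟨i, hi⟩ ⟨j, hj⟩
    exact Subtype.ext (Fin.ext ((hzero i hi).trans (hzero j hj).symm))
  have hcard : Fintype.card {u : U // Sum.inl u ∉ (T : Set (U ⊕ Σ c, Fin (len c)))} = 0 := by
    omega
  have hempty := Fintype.card_eq_zero_iff.1 hcard
  by_contra hu
  exact hempty.false ⟨u, hu⟩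

theorem pathNum_hubForest_of_forall_len_lt {n : ℕ} (hlt : ∀ c, len c < n) {c d : C} (hcd : c ≠ d)
    (hlen : n ≤ len c + 1 + len d) : (hubForest U len).pathNum n = Fintype.card U := by
  classical
  refine pathNum_eq_of_forall_le (Finset.univ.map ⟨Sum.inl, Sum.inl_injective⟩) ?_ (by simp)
    (card_hubs_le_of_isPathVertexCover hcd (hlt c) hlen)
  have := isPathVertexCover_range_inl (U := U) (Nat.zero_lt_of_lt (hlt c)) hlt
  simpa using this

theorem pathNum_hubForest_of_many_paths {m : ℕ} (hm : 0 < m) {D : Finset C}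
    (hD : ∀ d ∈ D, m ≤ len d + 1) (hcard : Fintype.card U + ∑ c, len c / m ≤ D.card) :
    (hubForest U len).pathNum m = Fintype.card U + ∑ c, len c / m := by
  classical
  have hB : Fintype.card (U ⊕ Σ c, Fin (len c / m)) = Fintype.card U + ∑ c, len c / m := by
    simp
  have hlast : ∀ (c : C) (j : Fin (len c / m)), m * (j.val + 1) - 1 < len c := by
    intro c j
    have h₁ : m * (j.val + 1) ≤ m * (len c / m) := Nat.mul_le_mul_left m j.isLt
    have h₂ := Nat.mul_div_le (len c) m
    have h₃ : 0 < m * (j.val + 1) := Nat.mul_pos hm j.val.succ_pos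
    omega
  let φ : (U ⊕ Σ c, Fin (len c / m)) → U ⊕ Σ c, Fin (len c) :=
    Sum.map id fun b => ⟨b.1, m * (b.2.val + 1) - 1, hlast b.1 b.2⟩
  refine pathNum_eq_of_forall_le (Finset.univ.image φ) ?_
    (Finset.card_image_le.trans (by rw [Finset.card_univ, hB])) fun T hT => ?_
  · intro u w p hp hlen
    obtain ⟨x, hx, hxS⟩ := isPathVertexCover_hubs_union hm p hp hlen
    refine ⟨x, hx, ?_⟩
    rw [Finset.coe_image, Finset.coe_univ, Set.image_univ]
    rcases x with u | ⟨c, i⟩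
    · exact ⟨.inl u, rfl⟩
    · obtain ⟨j, hj⟩ := hxS _ rfl
      simp only at hj
      obtain ⟨j, rfl⟩ : ∃ l, j = l + 1 := Nat.exists_eq_succ_of_ne_zero (by
        rintro rfl
        simp at hj)
      refine ⟨.inr ⟨c, j, ?_⟩, ?_⟩
      · rw [← Nat.succ_le_iff, Nat.le_div_iff_mul_le hm, Nat.mul_comm, Nat.succ_eq_add_one, ← hj]
        exact i.isLt
      · exact congrArg Sum.inr (sigma_fin_ext rfl (by simp [← hj]))
  · by_contra! hlt
    have hU := inl_mem_of_isPathVertexCover hm hD T hT (hlt.trans_le hcard)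
    choose i hi hiT using exists_mem_block_of_isPathVertexCover hm hT
    let g : (U ⊕ Σ c, Fin (len c / m)) → T :=
      Sum.elim (fun u => ⟨.inl u, hU u⟩) fun b => ⟨.inr ⟨b.1, i b.1 b.2⟩, hiT b.1 b.2⟩
    have hg : Function.Injective g := by
      rintro (u | ⟨c, j⟩) (v | ⟨c', j'⟩) h
      · simpa [g] using h
      · simp [g] at h
      · simp [g] at h
      · simp only [g, Sum.elim_inr, Subtype.mk.injEq, Sum.inr.injEq, Sigma.mk.injEq] at h
        obtain ⟨rfl, h⟩ := h
        have : j = j' := Fin.ext (by rw [← hi c j, ← hi c j', eq_of_heq h])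
        rw [this]
    have := Fintype.card_le_of_injective g hg
    rw [hB, Fintype.card_coe] at this
    omega

end HubForest

end SimpleGraph

theorem exists_graph_with_prescribed_psi (m k : ℕ) (hm : 1 ≤ m) (hmk : m < k)
    (pk pm : ℕ) (hpk : 0 < pk) (hpm : pk + k / m - 1 ≤ pm) :
    ∃ (V : Type) (instV : Fintype V) (G : SimpleGraph V),
      G.Connected ∧ @SimpleGraph.pathNum V instV G k = pk ∧
      @SimpleGraph.pathNum V instV G m = pm := by
  classical
  have hq : 1 ≤ k / m := (Nat.one_le_div_iff hm).2 hmk.le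
  have hkm : m * (k / m) + k % m = k := Nat.div_add_mod k m
  have hr := Nat.mod_lt k hm
  have hqm : m ≤ m * (k / m) := Nat.le_mul_of_pos_right m hq
  let len : Option (Fin (pm + 1 - pk - k / m) ⊕ Fin (pm + 1)) → ℕ := fun c =>
    c.elim (m * (k / m) - 1) (Sum.elim (fun _ => m) fun _ => m - 1)
  have hsum : pk + ∑ c, len c / m = pm := by
    have h₁ : (m * (k / m) - 1) / m = k / m - 1 := by
      rw [Nat.mul_sub_div 0 m (k / m) (by omega)]
      simp
    have h₂ : (m - 1) / m = 0 := Nat.div_eq_of_lt (by omega)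
    simp [len, Fintype.sum_option, h₁, h₂, Nat.div_self hm]
    omega
  have : Nonempty (Fin pk) := ⟨⟨0, hpk⟩⟩
  refine ⟨_, inferInstance, SimpleGraph.hubForest (Fin pk) len,
    SimpleGraph.hubForest_connected, ?_, ?_⟩
  · have hlt : ∀ c, len c < k := by
      rintro (_ | _ | _) <;> simp [len] <;> omega
    rw [SimpleGraph.pathNum_hubForest_of_forall_len_lt hlt (c := none) (d := some (.inr 0))
      (by simp) (by simp [len]; omega), Fintype.card_fin]
  · have hD : ∀ d ∈ Finset.univ.map
        (Function.Embedding.inr.trans (Function.Embedding.some (α := Fin _ ⊕ Fin (pm + 1)))),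
        m ≤ len d + 1 := by
      intro d hd
      obtain ⟨y, -, rfl⟩ := Finset.mem_map.1 hd
      simp [len]
      omega
    rw [SimpleGraph.pathNum_hubForest_of_many_paths hm hD, Fintype.card_fin, hsum]
    rw [Fintype.card_fin, hsum]
    simp
end

section
/- For every integer n ≥ 4 there exist connected finite simple graphs G and H, each on n vertices, such that G and H are not isomorphic but ψ_k(G) = ψ_k(H) for every k with 1 ≤ k ≤ n. -/
namespace SimpleGraph

/-- The star on `Fin n` centred at `0` together with the edge joining `1` and `2`. -/
def starWithTriangle (n : ℕ) : SimpleGraph (Fin n) where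
  Adj u v := u ≠ v ∧ (u.1 = 0 ∨ v.1 = 0 ∨ u.1 + v.1 = 3)
  symm := ⟨fun u v h => by grind⟩
  loopless := ⟨fun u h => h.1 rfl⟩

/-- The star with one subdivided edge: `0` is joined to every vertex but `2`,
and `2` is a leaf attached to `1`. -/
def subdividedStar (n : ℕ) : SimpleGraph (Fin n) where
  Adj u v := u ≠ v ∧ ((u.1 = 0 ∧ v.1 ≠ 2) ∨ (v.1 = 0 ∧ u.1 ≠ 2) ∨ u.1 + v.1 = 3)
  symm := ⟨fun u v h => by grind⟩
  loopless := ⟨fun u h => h.1 rfl⟩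

lemma subdividedStar_le (n : ℕ) : subdividedStar n ≤ starWithTriangle n := by
  intro u v h
  simp only [subdividedStar, starWithTriangle] at *
  grind

section PathVertexCover

variable {V : Type*} {G H : SimpleGraph V} {k : ℕ}

lemma IsPathVertexCover.anti {S : Set V} (h : H ≤ G) (hS : G.IsPathVertexCover k S) :
    H.IsPathVertexCover k S := by
  intro u w p hp hk
  simpa using hS (p.mapLe h) (hp.mapLe h) (by simpa using hk)

lemma pathNum_eq_of_le [Fintype V] (h : H ≤ G)
    (hex : ∀ S : Finset V, H.IsPathVertexCover k S →
      ∃ T : Finset V, G.IsPathVertexCover k T ∧ T.card ≤ S.card) :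
    G.pathNum k = H.pathNum k := by
  have mem (K : SimpleGraph V) (T : Finset V) (hT : K.IsPathVertexCover k T) :
      K.pathNum k ≤ T.card := Nat.sInf_le ⟨T, hT, rfl⟩
  by_cases hne : ∃ S : Finset V, H.IsPathVertexCover k S
  · obtain ⟨S₀, hS₀⟩ := hne
    obtain ⟨T₀, hT₀, -⟩ := hex S₀ hS₀
    obtain ⟨S, hS, hSc⟩ : H.pathNum k ∈ _ := Nat.sInf_mem ⟨_, S₀, hS₀, rfl⟩
    obtain ⟨T, hT, hTc⟩ : G.pathNum k ∈ _ := Nat.sInf_mem ⟨_, T₀, hT₀, rfl⟩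
    obtain ⟨T', hT', hle⟩ := hex S hS
    have h₁ := mem G T' hT'
    have h₂ := mem H T (hT.anti h)
    omega
  · have hneG : ¬ ∃ S : Finset V, G.IsPathVertexCover k S := fun ⟨S, hS⟩ => hne ⟨S, hS.anti h⟩
    push Not at hne hneG
    simp [pathNum, hne, hneG]

lemma IsPathVertexCover.mem_of_one {S : Set V} (hS : G.IsPathVertexCover 1 S) (v : V) :
    v ∈ S := by
  simpa using hS (Walk.nil : G.Walk v v) (by simp) (by simp)

lemma IsPathVertexCover.mem_or_mem_of_adj {S : Set V} (hS : G.IsPathVertexCover 2 S) {u v : V}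
    (h : G.Adj u v) : u ∈ S ∨ v ∈ S := by
  simpa using hS (Walk.cons h Walk.nil) (by simp [h.ne]) (by simp)

lemma IsPathVertexCover.nonempty_of_three {S : Set V} (hS : G.IsPathVertexCover 3 S) {a b c : V}
    (hab : G.Adj a b) (hbc : G.Adj b c) (hac : a ≠ c) : S.Nonempty := by
  obtain ⟨x, -, hx⟩ := hS (.cons hab (.cons hbc .nil)) (by simp [hab.ne, hbc.ne, hac]) (by simp)
  exact ⟨x, hx⟩

lemma IsPathVertexCover.nonempty_of_four {S : Set V} (hS : G.IsPathVertexCover 4 S) {a b c d : V}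
    (hab : G.Adj a b) (hbc : G.Adj b c) (hcd : G.Adj c d) (hac : a ≠ c) (had : a ≠ d)
    (hbd : b ≠ d) : S.Nonempty := by
  obtain ⟨x, -, hx⟩ := hS (.cons hab (.cons hbc (.cons hcd .nil)))
    (by simp [hab.ne, hbc.ne, hcd.ne, hac, had, hbd]) (by simp)
  exact ⟨x, hx⟩

end PathVertexCover

lemma subdividedStar_connected (m : ℕ) : (subdividedStar (m + 4)).Connected := by
  have key (v : Fin (m + 4)) : (subdividedStar (m + 4)).Reachable ⟨0, by omega⟩ v := by
    have h1 : (subdividedStar (m + 4)).Adj ⟨0, by omega⟩ ⟨1, by omega⟩ := by simp [subdividedStar]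
    have h2 : (subdividedStar (m + 4)).Adj ⟨1, by omega⟩ ⟨2, by omega⟩ := by simp [subdividedStar]
    by_cases hv0 : v.1 = 0
    · rw [show v = ⟨0, by omega⟩ from Fin.ext hv0]
    by_cases hv2 : v.1 = 2
    · rw [show v = ⟨2, by omega⟩ from Fin.ext hv2]
      exact h1.reachable.trans h2.reachable
    · exact Adj.reachable ⟨fun h => hv0 (congrArg Fin.val h.symm), Or.inl ⟨rfl, hv2⟩⟩
  exact ⟨fun u v => (key u).symm.trans (key v)⟩

lemma not_nonempty_iso_starWithTriangle_subdividedStar (m : ℕ) :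
    ¬ Nonempty (starWithTriangle (m + 4) ≃g subdividedStar (m + 4)) := by
  classical
  rintro ⟨e⟩
  have hlt : subdividedStar (m + 4) < starWithTriangle (m + 4) := by
    refine lt_of_le_not_ge (subdividedStar_le _) fun hge => ?_
    have : (starWithTriangle (m + 4)).Adj ⟨0, by omega⟩ ⟨2, by omega⟩ := by
      simp [starWithTriangle]
    have := hge this
    simp [subdividedStar] at this
  exact (Finset.card_lt_card (edgeFinset_ssubset_edgeFinset.2 hlt)).ne e.card_edgeFinset_eq.symm

lemma starWithTriangle_isPathVertexCover_two (m : ℕ) :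
    (starWithTriangle (m + 4)).IsPathVertexCover 2
      (({⟨0, by omega⟩, ⟨1, by omega⟩} : Finset (Fin (m + 4))) : Set (Fin (m + 4))) := by
  intro u w p hp hk
  match p, hp, hk with
  | .cons (v := v) h q, hp, hk =>
    have hu : u ∈ (Walk.cons h q).support := by simp
    have hv : v ∈ (Walk.cons h q).support := by simp
    simp only [starWithTriangle] at h
    have : u.1 = 0 ∨ u.1 = 1 ∨ v.1 = 0 ∨ v.1 = 1 := by omega
    simp only [Finset.coe_insert, Finset.coe_singleton, Set.mem_insert_iff,
      Set.mem_singleton_iff, Fin.ext_iff]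
    grind

lemma starWithTriangle_isPathVertexCover_of_three_le (m k : ℕ) (hk3 : 3 ≤ k) :
    (starWithTriangle (m + 4)).IsPathVertexCover k
      (({⟨0, by omega⟩} : Finset (Fin (m + 4))) : Set (Fin (m + 4))) := by
  intro u w p hp hk
  match p, hp, hk with
  | .nil, _, hk => simp at hk; omega
  | .cons _ .nil, _, hk => simp at hk; omega
  | .cons (v := v) h (.cons (v := x) h' q), hp, _ =>
    have hu : u ∈ (Walk.cons h (Walk.cons h' q)).support := by simp
    have hv : v ∈ (Walk.cons h (Walk.cons h' q)).support := by simp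
    have hx : x ∈ (Walk.cons h (Walk.cons h' q)).support := by simp
    have hux : u ≠ x := by
      rintro rfl
      simp at hp
    simp only [starWithTriangle] at h h'
    have : u.1 = 0 ∨ v.1 = 0 ∨ x.1 = 0 := by
      simp only [ne_eq, Fin.ext_iff] at hux
      omega
    simp only [Finset.coe_singleton, Set.mem_singleton_iff, Fin.ext_iff]
    grind

lemma starWithTriangle_isPathVertexCover_empty (m k : ℕ) (hk5 : 5 ≤ k) :
    (starWithTriangle (m + 4)).IsPathVertexCover k
      ((∅ : Finset (Fin (m + 4))) : Set (Fin (m + 4))) := by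
  intro u w p hp hk
  match p, hp, hk with
  | .nil, _, hk => simp at hk; omega
  | .cons _ .nil, _, hk => simp at hk; omega
  | .cons _ (.cons _ .nil), _, hk => simp at hk; omega
  | .cons _ (.cons _ (.cons _ .nil)), _, hk => simp at hk; omega
  | .cons (v := a) h₁ (.cons (v := b) h₂ (.cons (v := c) h₃ (.cons (v := d) h₄ q))), hp, _ =>
    exfalso
    have hnd := hp.support_nodup
    have hd : d ∈ q.support := q.start_mem_support
    simp only [Walk.support_cons, List.nodup_cons, List.mem_cons, not_or] at hnd
    obtain ⟨⟨-, hub, huc, hud⟩, ⟨-, hac, had⟩, ⟨-, hbd⟩, -⟩ := hnd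
    replace hud : u ≠ d := fun h => hud (h ▸ hd)
    replace had : a ≠ d := fun h => had (h ▸ hd)
    replace hbd : b ≠ d := fun h => hbd (h ▸ hd)
    obtain ⟨hua, h₁⟩ := h₁
    obtain ⟨hab, h₂⟩ := h₂
    obtain ⟨hbc, h₃⟩ := h₃
    obtain ⟨hcd, h₄⟩ := h₄
    omega

lemma subdividedStar_two_le_card (m : ℕ) (S : Finset (Fin (m + 4)))
    (hS : (subdividedStar (m + 4)).IsPathVertexCover 2 S) : 2 ≤ S.card := by
  have h₁ := hS.mem_or_mem_of_adj
    (show (subdividedStar (m + 4)).Adj ⟨0, by omega⟩ ⟨3, by omega⟩ by simp [subdividedStar])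
  have h₂ := hS.mem_or_mem_of_adj
    (show (subdividedStar (m + 4)).Adj ⟨1, by omega⟩ ⟨2, by omega⟩ by simp [subdividedStar])
  simp only [Finset.mem_coe] at h₁ h₂
  refine Finset.one_lt_card.2 ?_
  rcases h₁ with h₁ | h₁ <;> rcases h₂ with h₂ | h₂ <;> exact ⟨_, h₁, _, h₂, by simp⟩

lemma subdividedStar_one_le_card (m k : ℕ) (hk : k = 3 ∨ k = 4) (S : Finset (Fin (m + 4)))
    (hS : (subdividedStar (m + 4)).IsPathVertexCover k S) : 1 ≤ S.card := by
  have h₁ : (subdividedStar (m + 4)).Adj ⟨3, by omega⟩ ⟨0, by omega⟩ := by simp [subdividedStar]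
  have h₂ : (subdividedStar (m + 4)).Adj ⟨0, by omega⟩ ⟨1, by omega⟩ := by simp [subdividedStar]
  have h₃ : (subdividedStar (m + 4)).Adj ⟨1, by omega⟩ ⟨2, by omega⟩ := by simp [subdividedStar]
  rw [Nat.one_le_iff_ne_zero, Finset.card_ne_zero]
  rcases hk with rfl | rfl
  · exact hS.nonempty_of_three h₂ h₃ (by simp)
  · exact hS.nonempty_of_four h₁ h₂ h₃ (by simp) (by simp) (by simp)

lemma pathNum_starWithTriangle_eq (m k : ℕ) (hk : 1 ≤ k) :
    (starWithTriangle (m + 4)).pathNum k = (subdividedStar (m + 4)).pathNum k := by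
  refine pathNum_eq_of_le (subdividedStar_le _) fun S hS => ?_
  obtain rfl | rfl | hk34 | hk5 : k = 1 ∨ k = 2 ∨ (k = 3 ∨ k = 4) ∨ 5 ≤ k := by omega
  · exact ⟨S, fun u w p _ _ => ⟨u, p.start_mem_support, hS.mem_of_one u⟩, le_rfl⟩
  · exact ⟨_, starWithTriangle_isPathVertexCover_two m,
      Finset.card_le_two.trans (subdividedStar_two_le_card m S hS)⟩
  · exact ⟨_, starWithTriangle_isPathVertexCover_of_three_le m k (by omega),
      (Finset.card_singleton _).trans_le (subdividedStar_one_le_card m k hk34 S hS)⟩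
  · exact ⟨_, starWithTriangle_isPathVertexCover_empty m k hk5, by simp⟩

end SimpleGraph

theorem exists_nonisomorphic_same_path_sequence (n : ℕ) (hn : 4 ≤ n) :
    ∃ G H : SimpleGraph (Fin n), G.Connected ∧ H.Connected ∧
      ¬ Nonempty (G ≃g H) ∧
      ∀ k : ℕ, 1 ≤ k → k ≤ n → G.pathNum k = H.pathNum k := by
  obtain ⟨m, rfl⟩ := Nat.exists_eq_add_of_le' hn
  have hconn := SimpleGraph.subdividedStar_connected m
  exact ⟨.starWithTriangle (m + 4), .subdividedStar (m + 4),
    hconn.mono (SimpleGraph.subdividedStar_le _), hconn,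
    SimpleGraph.not_nonempty_iso_starWithTriangle_subdividedStar m,
    fun k hk _ => SimpleGraph.pathNum_starWithTriangle_eq m k hk⟩
end

section
/- Let G be a finite simple graph on n vertices and let k be an integer with 2 ≤ k ≤ n. If ψ_k(G) = n − k + 1, then G is connected. -/
/-- The complement of a `k`-set containing two mutually unreachable vertices is a `k`-path
vertex cover. -/
theorem SimpleGraph.isPathVertexCover_compl_of_not_reachable {V : Type*} [Fintype V]
    [DecidableEq V] {G : SimpleGraph V} {k : ℕ} {u v : V} (huv : ¬ G.Reachable u v)
    {T : Finset V} (hu : u ∈ T) (hv : v ∈ T) (hT : T.card = k) :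
    G.IsPathVertexCover k ↑(Tᶜ) := by
  intro a b p hp hlen
  by_contra! hne
  have hsub : p.support.toFinset ⊆ T := fun x hx => by
    simpa using hne x (List.mem_toFinset.mp hx)
  have heq : p.support.toFinset = T := Finset.eq_of_subset_of_card_le hsub <| by
    rw [List.toFinset_card_of_nodup hp.support_nodup, hlen, hT]
  have reach : ∀ x ∈ T, G.Reachable a x := fun x hx =>
    ⟨p.takeUntil x (List.mem_toFinset.mp (heq ▸ hx))⟩
  exact huv ((reach u hu).symm.trans (reach v hv))

theorem connected_of_psi_eq_max {V : Type*} [Fintype V] (G : SimpleGraph V)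
    (k : ℕ) (hk2 : 2 ≤ k) (hkn : k ≤ Fintype.card V)
    (h : G.pathNum k = Fintype.card V - k + 1) : G.Connected := by
  classical
  have : Nonempty V := Fintype.card_pos_iff.mp (by omega)
  refine ⟨fun u v => ?_⟩
  by_contra huv
  obtain ⟨T, hsub, hT⟩ := Finset.exists_superset_card_eq
    (s := {u, v}) (Finset.card_le_two.trans hk2) hkn
  have hcover := SimpleGraph.isPathVertexCover_compl_of_not_reachable huv
    (hsub (by simp)) (hsub (by simp)) hT
  have hle : G.pathNum k ≤ Fintype.card V - k :=
    Nat.sInf_le ⟨Tᶜ, hcover, by rw [Finset.card_compl, hT]⟩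
  omega
end

section
/- Let n ≥ 3 and let 2 ≤ k < n. Assume that for every connected simple graph H on m vertices with 2 ≤ m ≤ n, the implication ψ_{m−1}(H) = 2 ⟹ ψ_m(H) = 1 holds. Then for every simple graph G on n vertices: if ψ_k(G) = n − k + 1, then ψ_j(G) = n − j + 1 for every j with k < j ≤ n. -/
namespace SimpleGraph

/-- Every set of `k` vertices of `G` is the vertex set of a path in `G`. -/
def AllTraceable {V : Type*} (G : SimpleGraph V) (k : ℕ) : Prop :=
  ∀ T : Finset V, T.card = k →
    ∃ (u w : V) (p : G.Walk u w), p.IsPath ∧ p.support.length = k ∧ ∀ x ∈ p.support, x ∈ T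

theorem pathNum_eq_iff_allTraceable {V : Type*} [Fintype V] (G : SimpleGraph V) {k : ℕ}
    (hk1 : 1 ≤ k) (hk : k ≤ Fintype.card V) :
    G.pathNum k = Fintype.card V - k + 1 ↔ G.AllTraceable k := by
  classical
  constructor
  · intro h T hT
    by_contra hcon
    have hcover : G.IsPathVertexCover k ↑Tᶜ := by
      intro u w p hp hlen
      by_contra hno
      refine hcon ⟨u, w, p, hp, hlen, fun x hx => ?_⟩
      by_contra hxT
      exact hno ⟨x, hx, by simpa using hxT⟩
    have hle : G.pathNum k ≤ Tᶜ.card := Nat.sInf_le ⟨Tᶜ, hcover, rfl⟩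
    rw [Finset.card_compl] at hle
    omega
  · intro h
    obtain ⟨S, -, hS⟩ := Finset.exists_subset_card_eq
      (s := (Finset.univ : Finset V)) (n := Fintype.card V - k + 1)
      (by rw [Finset.card_univ]; omega)
    have hmem : Fintype.card V - k + 1 ∈
        {m : ℕ | ∃ S : Finset V, G.IsPathVertexCover k ↑S ∧ S.card = m} := by
      refine ⟨S, fun u w p hp hlen => ?_, hS⟩
      by_contra hno
      have hdisj : Disjoint p.support.toFinset S :=
        Finset.disjoint_left.2 fun x hx hxS => hno ⟨x, by simpa using hx, hxS⟩
      have hcard := Finset.card_le_univ (p.support.toFinset ∪ S)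
      rw [Finset.card_union_of_disjoint hdisj, List.toFinset_card_of_nodup hp.support_nodup]
        at hcard
      omega
    refine le_antisymm (Nat.sInf_le hmem) (le_csInf ⟨_, hmem⟩ ?_)
    rintro m ⟨S, hS, rfl⟩
    by_contra hlt
    obtain ⟨T, hTS, hT⟩ := Finset.exists_subset_card_eq (s := Sᶜ) (n := k)
      (by rw [Finset.card_compl]; omega)
    obtain ⟨u, w, p, hp, hlen, hpT⟩ := h T hT
    obtain ⟨x, hx, hxS⟩ := hS p hp hlen
    exact Finset.mem_compl.1 (hTS (hpT x hx)) hxS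

theorem AllTraceable.induce {V : Type*} {G : SimpleGraph V} {k : ℕ} (h : G.AllTraceable k)
    (s : Set V) : (G.induce s).AllTraceable k := by
  intro T hT
  obtain ⟨u, w, p, hp, hlen, hpT⟩ := h (T.map (Function.Embedding.subtype _)) (by simpa using hT)
  have hps : ∀ x ∈ p.support, x ∈ s := fun x hx => by
    obtain ⟨y, -, rfl⟩ := Finset.mem_map.1 (hpT x hx)
    exact y.2
  refine ⟨_, _, p.induce s hps, ?_, ?_, ?_⟩
  · exact Walk.IsPath.of_map (f := (Embedding.induce s).toHom) (by simpa using hp)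
  · simpa using hlen
  · intro x hx
    have hx' : (x : V) ∈ p.support := by
      rw [Walk.support_induce] at hx
      simpa using hx
    simpa using hpT x hx'

/-- If `2 ≤ k` and every set of `k` vertices is the vertex set of a path, then the graph
is connected. -/
theorem AllTraceable.connected {V : Type*} [Fintype V] {G : SimpleGraph V} {k : ℕ}
    (h : G.AllTraceable k) (hk : 2 ≤ k) (hcard : k ≤ Fintype.card V) : G.Connected := by
  classical
  have hne : Nonempty V := Fintype.card_pos_iff.1 (by omega)
  refine (connected_iff _).2 ⟨fun a b => ?_, hne⟩
  obtain ⟨T, hsub, -, hT⟩ := Finset.exists_subsuperset_card_eq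
    (Finset.subset_univ ({a, b} : Finset V)) (n := k)
    (Finset.card_le_two.trans hk) (by simpa using hcard)
  obtain ⟨u, w, p, hp, hlen, hpT⟩ := h T hT
  have hsupp : p.support.toFinset = T := by
    refine Finset.eq_of_subset_of_card_le (fun x hx => hpT x (by simpa using hx)) ?_
    rw [List.toFinset_card_of_nodup hp.support_nodup, hlen, hT]
  have hreach : ∀ x ∈ T, G.Reachable u x := fun x hx =>
    (p.takeUntil x (by simpa [← hsupp] using hx)).reachable
  exact (hreach a (hsub (by simp))).symm.trans (hreach b (hsub (by simp)))

theorem AllTraceable.of_forall_induce {V : Type*} {G : SimpleGraph V} {k : ℕ}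
    (h : ∀ T : Finset V, T.card = k → (G.induce (T : Set V)).AllTraceable k) :
    G.AllTraceable k := by
  intro T hT
  obtain ⟨u, w, p, hp, hlen, -⟩ := h T hT Finset.univ (by simpa using hT)
  refine ⟨_, _, p.map (Embedding.induce (T : Set V)).toHom,
    hp.map (Embedding.induce (G := G) (T : Set V)).injective,
    by rw [Walk.support_map, List.length_map, hlen], ?_⟩
  intro x hx
  rw [Walk.support_map] at hx
  obtain ⟨y, -, rfl⟩ := List.mem_map.1 hx
  exact y.2

end SimpleGraph

theorem psi_cascade_of_conjecture (n : ℕ) (hn : 3 ≤ n) (k : ℕ) (hk2 : 2 ≤ k) (hkn : k < n)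
    (hyp : ∀ (W : Type) (instW : Fintype W) (H : SimpleGraph W),
      2 ≤ Fintype.card W → Fintype.card W ≤ n → H.Connected →
      @SimpleGraph.pathNum W instW H (Fintype.card W - 1) = 2 →
      @SimpleGraph.pathNum W instW H (Fintype.card W) = 1)
    (V : Type) (instV : Fintype V) (G : SimpleGraph V) (hcard : Fintype.card V = n)
    (h : @SimpleGraph.pathNum V instV G k = n - k + 1) :
    ∀ j : ℕ, k < j → j ≤ n → @SimpleGraph.pathNum V instV G j = n - j + 1 := by
  subst hcard
  rw [G.pathNum_eq_iff_allTraceable (by omega) hkn.le] at h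
  intro j hkj
  induction j, hkj.le using Nat.le_induction with
  | base => exact absurd hkj (lt_irrefl k)
  | succ j hj ih =>
    intro hjn
    have hG : G.AllTraceable j := by
      rcases hj.eq_or_lt with rfl | hlt
      · exact h
      · exact (G.pathNum_eq_iff_allTraceable (by omega) (by omega)).1 (ih hlt (by omega))
    rw [G.pathNum_eq_iff_allTraceable (by omega) hjn]
    refine .of_forall_induce fun T hT => ?_
    have hW : Fintype.card (T : Set V) = j + 1 := by simpa using hT
    have hH := hG.induce (T : Set V)
    have hψ := hyp _ inferInstance (G.induce (T : Set V)) (by omega) (by omega)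
      (hH.connected (by omega) (by omega))
    rw [hW, Nat.add_sub_cancel] at hψ
    refine ((G.induce (T : Set V)).pathNum_eq_iff_allTraceable (by omega) hW.ge).1 ?_
    rw [hψ (by rw [SimpleGraph.pathNum_eq_iff_allTraceable _ (by omega) (by omega) |>.2 hH]; omega)]
    omega
end

section
/- Let G = (V,E) be a connected simple graph on n ≥ 4 vertices with V = {p_1, …, p_{n−1}, q}, where p_1 − p_2 − ⋯ − p_{n−1} is a path in G. If ψ_{n−1}(G) = 2 and ψ_n(G) = 0, then: (1) the degrees of p_1 and p_{n−1} in G are each at least 2; (2) p_1p_{n−1} ∉ E, qp_1 ∉ E, qp_{n−1} ∉ E, and for every i ∈ {2, …, n−2}, if qp_i ∈ E then qp_{i+1} ∉ E. -/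
namespace SimpleGraph

variable {V : Type*} {G : SimpleGraph V}

/-- A sequence of consecutively adjacent vertices is the support of a walk. -/
theorem exists_walk_support_eq_map_range_s15 (f : ℕ → V) (m : ℕ)
    (hf : ∀ i < m, G.Adj (f i) (f (i + 1))) :
    ∃ w : G.Walk (f 0) (f m), w.support = (List.range (m + 1)).map f := by
  induction m with
  | zero => exact ⟨.nil, by simp⟩
  | succ m ih =>
    obtain ⟨w, hw⟩ := ih fun i hi => hf i (by omega)
    refine ⟨w.concat (hf m (by omega)), ?_⟩
    rw [Walk.support_concat, hw, List.range_succ (n := m + 1)]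
    simp

/-- An injective sequence of `k` consecutively adjacent vertices meets every `k`-path vertex
cover. -/
theorem IsPathVertexCover.exists_mem_of_injOn {k : ℕ} (hk : 0 < k) {S : Set V}
    (hS : G.IsPathVertexCover k S) {f : ℕ → V} (hinj : Set.InjOn f (Set.Iio k))
    (hadj : ∀ i, i + 1 < k → G.Adj (f i) (f (i + 1))) : ∃ x, x ∈ S := by
  obtain ⟨m, rfl⟩ : ∃ m, k = m + 1 := ⟨k - 1, by omega⟩
  obtain ⟨w, hw⟩ := exists_walk_support_eq_map_range_s15 f m fun i hi => hadj i (by omega)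
  obtain ⟨x, -, hx⟩ := hS w
    (w.isPath_def.2 <| hw ▸ List.nodup_range.map_on fun a ha b hb h =>
      hinj (by simpa using ha) (by simpa using hb) h)
    (by simp [hw])
  exact ⟨x, hx⟩

variable [Fintype V]

theorem pathNum_le_card {k : ℕ} {S : Finset V} (hS : G.IsPathVertexCover k S) :
    G.pathNum k ≤ S.card :=
  Nat.sInf_le ⟨S, hS, rfl⟩

/-- If `ψ_k(G) = 0`, the empty set is a `k`-path vertex cover. -/
theorem isPathVertexCover_empty_of_pathNum_eq_zero {k : ℕ} (h : G.pathNum k = 0) :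
    G.IsPathVertexCover k ∅ := by
  rcases Nat.sInf_eq_zero.1 h with ⟨S, hS, hcard⟩ | hempty
  · simpa [Finset.card_eq_zero.1 hcard] using hS
  · have hmem : Fintype.card V ∈
        {m : ℕ | ∃ S : Finset V, G.IsPathVertexCover k ↑S ∧ S.card = m} :=
      ⟨Finset.univ, fun u _ p _ _ => ⟨u, p.start_mem_support, by simp⟩, rfl⟩
    simp [hempty] at hmem

/-- If no single vertex meets all paths missing only one vertex, every vertex with a neighbor has
at least two neighbors. -/
theorem two_le_ncard_neighborSet_of_pathNum {k : ℕ} (hk : 2 ≤ k)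
    (hcard : Fintype.card V = k + 1) (h : 2 ≤ G.pathNum k) {v w : V} (hvw : G.Adj v w) :
    2 ≤ (G.neighborSet v).ncard := by
  classical
  by_contra hlt
  have honly : ∀ x, G.Adj v x → x = w := fun x hx =>
    (Set.ncard_le_one_iff (s := G.neighborSet v)).1 (by omega) hx hvw
  have hcover : G.IsPathVertexCover k ({w} : Finset V) := by
    intro a b p hp hlen
    refine ⟨w, ?_, by simp⟩
    by_contra hw
    have hsub : p.support.toFinset ⊆ Finset.univ.erase w := fun x hx => by
      simp only [Finset.mem_erase, Finset.mem_univ, and_true]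
      rintro rfl
      exact hw (by simpa using hx)
    have hsupp : p.support.toFinset = Finset.univ.erase w :=
      Finset.eq_of_subset_of_card_le hsub (by
        rw [List.toFinset_card_of_nodup hp.support_nodup, hlen,
          Finset.card_erase_of_mem (Finset.mem_univ _), Finset.card_univ, hcard]
        omega)
    have hv : v ∈ p.support := by
      rw [← List.mem_toFinset, hsupp]
      simp [hvw.ne]
    have hnil : ¬ p.Nil := fun hn => by
      rw [Walk.length_support, Walk.length_eq_zero_iff.2 hn] at hlen
      omega
    obtain ⟨e, he, hve⟩ := (Walk.mem_support_iff_exists_mem_edges_of_not_nil hnil).1 hv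
    obtain ⟨x, rfl⟩ := Sym2.mem_iff_exists.1 hve
    exact hw (honly x (p.adj_of_mem_edges he) ▸ p.snd_mem_support_of_mem_edges he)
  have := pathNum_le_card hcover
  simp at this
  omega

end SimpleGraph

/-- Lemma 9 (1)–(2) of the paper. The vertices of `G` are `p 0, …, p (n-2)`
(the paper's `p_1, …, p_{n-1}`) together with `q`, and `p 0 − p 1 − ⋯ − p (n-2)`
is a path in `G`. -/
theorem structure_of_no_hamiltonian_path₁ {V : Type*} [Fintype V] (G : SimpleGraph V)
    (n : ℕ) (hn : 4 ≤ n) (hcard : Fintype.card V = n)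
    (p : Fin (n - 1) → V) (q : V)
    (hinj : Function.Injective p) (hq : q ∉ Set.range p)
    (hpath : ∀ (i : ℕ) (h : i + 1 < n - 1),
      G.Adj (p ⟨i, by omega⟩) (p ⟨i + 1, h⟩))
    (hconn : G.Connected)
    (h1 : G.pathNum (n - 1) = 2) (h2 : G.pathNum n = 0) :
    (2 ≤ (G.neighborSet (p ⟨0, by omega⟩)).ncard ∧
     2 ≤ (G.neighborSet (p ⟨n - 2, by omega⟩)).ncard) ∧
    (¬ G.Adj (p ⟨0, by omega⟩) (p ⟨n - 2, by omega⟩) ∧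
     ¬ G.Adj q (p ⟨0, by omega⟩) ∧
     ¬ G.Adj q (p ⟨n - 2, by omega⟩) ∧
     ∀ (j : ℕ) (hj1 : 1 ≤ j) (hj2 : j + 1 < n - 1),
       G.Adj q (p ⟨j, by omega⟩) → ¬ G.Adj q (p ⟨j + 1, hj2⟩)) := by
  have hcov := SimpleGraph.isPathVertexCover_empty_of_pathNum_eq_zero h2
  let P : ℕ → V := fun i => if h : i < n - 1 then p ⟨i, h⟩ else q
  have hPp : ∀ i (h : i < n - 1), P i = p ⟨i, h⟩ := fun i h => dif_pos h
  have hPq : P (n - 1) = q := dif_neg (by omega)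
  have hPinj : Set.InjOn P (Set.Iio n) := by
    intro a ha b hb hab
    simp only [Set.mem_Iio] at ha hb
    by_cases h : a < n - 1 <;> by_cases h' : b < n - 1
    · rw [hPp a h, hPp b h'] at hab
      simpa using hinj hab
    · rw [hPp a h, show b = n - 1 by omega, hPq] at hab
      exact (hq ⟨_, hab⟩).elim
    · rw [hPp b h', show a = n - 1 by omega, hPq] at hab
      exact (hq ⟨_, hab.symm⟩).elim
    · omega
  have hPadj : ∀ i, i + 1 < n - 1 → G.Adj (P i) (P (i + 1)) := fun i h => by
    rw [hPp i (by omega), hPp (i + 1) h]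
    exact hpath i h
  have hPsurj : ∀ x, ∃ i < n, P i = x := by
    have hbij : Function.Bijective fun i : Fin n => P i :=
      (Fintype.bijective_iff_injective_and_card _).2
        ⟨fun a b h => Fin.ext (hPinj a.2 b.2 h), by simp [hcard]⟩
    intro x
    obtain ⟨i, hi⟩ := hbij.2 x
    exact ⟨i, i.2, hi⟩
  -- No reordering of the vertices is a Hamiltonian path.
  have hno : ∀ σ : ℕ → ℕ, (∀ i < n, σ i < n) → Set.InjOn σ (Set.Iio n) →
      ¬ ∀ i, i + 1 < n → G.Adj (P (σ i)) (P (σ (i + 1))) := fun σ hσ hσinj hadj => by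
    obtain ⟨x, hx⟩ := hcov.exists_mem_of_injOn (f := P ∘ σ) (by omega)
      (hPinj.comp hσinj hσ) hadj
    exact hx
  have hlast : ¬ G.Adj (P (n - 1)) (P (n - 2)) := fun h =>
    hno id (fun _ hi => hi) (Set.injOn_id _) fun i hi => by
      by_cases hi' : i + 1 < n - 1
      · exact hPadj i hi'
      · have hi2 : i = n - 2 := by omega
        have hi1 : i + 1 = n - 1 := by omega
        simp only [id, hi1]
        exact hi2 ▸ h.symm
  have hinsert : ∀ j, j + 1 < n - 1 → G.Adj (P (n - 1)) (P j) →
      ¬ G.Adj (P (n - 1)) (P (j + 1)) := fun j hj hqj hqj' =>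
    hno (fun i => if i ≤ j then i else if i = j + 1 then n - 1 else i - 1)
      (fun i hi => by split_ifs <;> omega)
      (fun a ha b hb h => by
        simp only [Set.mem_Iio] at ha hb
        dsimp only at h
        split_ifs at h <;> omega)
      fun i hi => by
        rcases lt_trichotomy i j with hij | rfl | hij
        · simpa [hij.le, Nat.succ_le_of_lt hij] using hPadj i (by omega)
        · simpa using hqj.symm
        · obtain rfl | hij' := eq_or_ne i (j + 1)
          · simpa using hqj'
          · have := hPadj (i - 1) (by omega)
            rw [Nat.sub_add_cancel (by omega)] at this
            simpa [hij.not_ge, hij', show ¬ i + 1 ≤ j by omega, hij.ne'] using this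
  -- A cycle through all `p i` can be opened at a neighbor of `q`.
  have hrot : ∀ j < n - 1, G.Adj (P (n - 1)) (P j) → (0 < j → G.Adj (P (n - 2)) (P 0)) →
      False := fun j hj hqj hcyc =>
    hno (fun i => if i = 0 then n - 1 else if j + i < n then j + i - 1 else j + i - n)
      (fun i hi => by split_ifs <;> omega)
      (fun a ha b hb h => by
        simp only [Set.mem_Iio] at ha hb
        dsimp only at h
        split_ifs at h <;> omega)
      fun i hi => by
        obtain rfl | hi0 := Nat.eq_zero_or_pos i
        · simpa [show j + 1 < n by omega] using hqj
        · rcases lt_trichotomy (j + i + 1) n with hlt | heq | hgt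
          · have := hPadj (j + i - 1) (by omega)
            rw [Nat.sub_add_cancel (by omega)] at this
            simpa [hi0.ne', show j + i < n by omega, show j + (i + 1) < n by omega] using this
          · have := hcyc (by omega)
            simpa [hi0.ne', show j + i < n by omega, show ¬ j + (i + 1) < n by omega,
              show j + i - 1 = n - 2 by omega, show j + (i + 1) - n = 0 by omega] using this
          · have := hPadj (j + i - n) (by omega)
            simpa [hi0.ne', show ¬ j + i < n by omega, show ¬ j + (i + 1) < n by omega,
              show j + (i + 1) - n = j + i - n + 1 by omega] using this
  have hdeg : ∀ {v w : V}, G.Adj v w → 2 ≤ (G.neighborSet v).ncard :=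
    SimpleGraph.two_le_ncard_neighborSet_of_pathNum (k := n - 1) (by omega) (by omega) h1.ge
  simp only [← hPp, ← hPq]
  refine ⟨⟨hdeg (hPadj 0 (by omega)), ?_⟩, fun hcyc => ?_, fun h => ?_, hlast,
    fun j _ hj => hinsert j hj⟩
  · have := hPadj (n - 3) (by omega)
    rw [show n - 3 + 1 = n - 2 by omega] at this
    exact hdeg this.symm
  · have : Nontrivial V := Fintype.one_lt_card_iff_nontrivial.1 (by omega)
    obtain ⟨x, hx⟩ := hconn.preconnected.exists_adj_of_nontrivial (P (n - 1))
    obtain ⟨j, hj, rfl⟩ := hPsurj x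
    have hjne : j ≠ n - 1 := fun h => hx.ne (h ▸ rfl)
    exact hrot j (by omega) hx fun _ => hcyc.symm
  · exact hrot 0 (by omega) h fun h0 => absurd h0 (lt_irrefl 0)
end

section
/- Let G = (V,E) be a connected simple graph on n ≥ 4 vertices with V = {p_1, …, p_{n−1}, q}, where p_1 − p_2 − ⋯ − p_{n−1} is a path in G. If ψ_{n−1}(G) = 2 and ψ_n(G) = 0, then the degree d(q) of q in G satisfies 2 ≤ d(q) ≤ ⌈(n−3)/2⌉. -/
namespace SimpleGraph

variable {V : Type*} {G : SimpleGraph V}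

/-- The minimum defining `pathNum` is attained. -/
theorem exists_isPathVertexCover_card_eq_pathNum_s17 [Fintype V] (G : SimpleGraph V) (k : ℕ) :
    ∃ S : Finset V, G.IsPathVertexCover k ↑S ∧ S.card = G.pathNum k :=
  Nat.sInf_mem (s := {m : ℕ | ∃ S : Finset V, G.IsPathVertexCover k ↑S ∧ S.card = m})
    ⟨_, Finset.univ, fun u _ w _ _ => ⟨u, w.start_mem_support, by simp⟩, rfl⟩

theorem IsPathVertexCover.pathNum_le_s17 [Fintype V] {k : ℕ} {S : Finset V}
    (hS : G.IsPathVertexCover k ↑S) : G.pathNum k ≤ S.card :=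
  Nat.sInf_le ⟨S, hS, rfl⟩

/-- If `ψ_k(G) = 0`, there is no path on `k` vertices. -/
theorem length_ne_of_pathNum_eq_zero [Fintype V] {k : ℕ} (h : G.pathNum k = 0) {l : List V}
    (hne : l ≠ []) (hchain : l.IsChain G.Adj) (hnodup : l.Nodup) : l.length ≠ k := by
  intro hlen
  obtain ⟨S, hS, hcard⟩ := G.exists_isPathVertexCover_card_eq_pathNum_s17 k
  rw [h, Finset.card_eq_zero] at hcard
  subst hcard
  obtain ⟨x, -, hx⟩ := hS (Walk.ofSupport l hne hchain)
    (by rwa [Walk.isPath_def, Walk.support_ofSupport]) (by rwa [Walk.support_ofSupport])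
  simp at hx

/-- Every vertex of a nontrivial walk has a neighbor on that walk. -/
theorem Walk.exists_adj_of_mem_support {u w x : V} (p : G.Walk u w) (hp : ¬p.Nil)
    (hx : x ∈ p.support) : ∃ y ∈ p.support, G.Adj x y := by
  induction p with
  | nil => simp at hp
  | @cons u v w h p ih =>
    rw [support_cons, List.mem_cons] at hx
    rcases hx with rfl | hx
    · exact ⟨v, by simp, h⟩
    · by_cases hnil : p.Nil
      · obtain rfl : x = v := by simpa [nil_iff_support_eq.mp hnil] using hx
        exact ⟨u, by simp, h.symm⟩
      · obtain ⟨y, hy, hadj⟩ := ih hnil hx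
        exact ⟨y, by simp [hy], hadj⟩

/-- If all neighbors of `q` lie in `{v}` with `v ≠ q`, then `{v}` meets every path that misses
at most one vertex of `G`. -/
theorem isPathVertexCover_singleton [Fintype V] {q v : V} (hvq : v ≠ q)
    (hsub : G.neighborSet q ⊆ {v}) (hcard : 3 ≤ Fintype.card V) :
    G.IsPathVertexCover (Fintype.card V - 1) ↑({v} : Finset V) := by
  classical
  intro a b w hw hlen
  refine ⟨v, ?_, by simp⟩
  by_contra hv
  have hq : q ∈ w.support := by
    by_contra hq
    have hle : (insert q (insert v w.support.toFinset)).card ≤ Fintype.card V :=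
      Finset.card_le_univ _
    rw [Finset.card_insert_of_notMem (by simp [hq, hvq.symm]),
      Finset.card_insert_of_notMem (by simpa using hv),
      List.toFinset_card_of_nodup hw.support_nodup] at hle
    omega
  have hnil : ¬w.Nil := by
    intro hnil
    rw [Walk.nil_iff_support_eq.mp hnil, List.length_singleton] at hlen
    omega
  obtain ⟨y, hy, hadj⟩ := w.exists_adj_of_mem_support hnil hq
  obtain rfl : y = v := hsub hadj
  exact hv hy

/-- If `ψ_{m+1}(G) = 0` and `q` lies off a path on `m` vertices, then no position `k ≤ m` of that
path has all its neighboring path vertices adjacent to `q`: inserting `q` there would give a path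
on `m + 1` vertices. -/
theorem length_lt_of_insert_of_pathNum_eq_zero [Fintype V] {m : ℕ} (h : G.pathNum (m + 1) = 0)
    {p : Fin m → V} {q : V} (hinj : Function.Injective p) (hq : q ∉ Set.range p)
    (hpath : ∀ (i : ℕ) (h : i + 1 < m), G.Adj (p ⟨i, by omega⟩) (p ⟨i + 1, h⟩)) {k : ℕ}
    (hpred : ∀ i : Fin m, (i : ℕ) + 1 = k → G.Adj q (p i))
    (hsucc : ∀ i : Fin m, (i : ℕ) = k → G.Adj q (p i)) : m < k := by
  by_contra! hk
  set l := List.ofFn p with hl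
  have hchain : l.IsChain G.Adj := by
    rw [List.isChain_iff_getElem]
    intro i hi
    simpa [hl] using hpath i (by simpa [hl] using hi)
  have hnodup : l.Nodup := List.nodup_ofFn.mpr hinj
  have hql : q ∉ l := by simpa [hl, List.mem_ofFn] using hq
  have hperm : (l.take k ++ q :: l.drop k).Perm (q :: l) := by
    simpa using List.perm_middle (a := q) (l₁ := l.take k) (l₂ := l.drop k)
  refine length_ne_of_pathNum_eq_zero h (l := l.take k ++ q :: l.drop k) (by simp) ?_
    (hperm.nodup_iff.mpr (List.nodup_cons.mpr ⟨hql, hnodup⟩)) (by rw [hperm.length_eq]; simp [hl])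
  refine (hchain.take k).append ((hchain.drop k).cons ?_) ?_
  · intro y hy
    rw [List.head?_drop, Option.mem_def, List.getElem?_eq_some_iff] at hy
    obtain ⟨hi, rfl⟩ := hy
    simpa [hl] using hsucc ⟨k, by simpa [hl] using hi⟩ rfl
  · intro x hx y hy
    obtain rfl : q = y := by simpa using hy
    rw [Option.mem_def, List.getLast?_eq_getElem?, List.getElem?_eq_some_iff] at hx
    obtain ⟨hi, rfl⟩ := hx
    have hlen : (l.take k).length = k := by simp [hl, hk]
    simp only [hlen] at hi ⊢
    simpa [hl] using (hpred ⟨k - 1, by omega⟩ (by simp only; omega)).symm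

end SimpleGraph

/-- A set of naturals in `[1, m)` without two consecutive elements has at most `m / 2` elements. -/
theorem Finset.two_mul_card_le_of_no_consecutive {A : Finset ℕ} {m : ℕ}
    (hpos : 0 ∉ A) (hlt : ∀ i ∈ A, i < m) (hgap : ∀ i ∈ A, i + 1 ∉ A) : 2 * A.card ≤ m := by
  have hdisj : Disjoint A (A.image (· + 1)) := by
    rw [Finset.disjoint_left]
    intro i hi hi'
    obtain ⟨j, hj, rfl⟩ := Finset.mem_image.mp hi'
    exact hgap j hj hi
  have hsub : A ∪ A.image (· + 1) ⊆ Finset.Icc 1 m := by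
    intro i hi
    rw [Finset.mem_Icc]
    rcases Finset.mem_union.mp hi with hi | hi
    · exact ⟨Nat.one_le_iff_ne_zero.mpr fun h => hpos (h ▸ hi), (hlt i hi).le⟩
    · obtain ⟨j, hj, rfl⟩ := Finset.mem_image.mp hi
      have := hlt j hj
      omega
  have := Finset.card_le_card hsub
  rw [Finset.card_union_of_disjoint hdisj,
    Finset.card_image_of_injective _ (add_left_injective 1), Nat.card_Icc] at this
  omega

/-- Corollary 10 of the paper: `2 ≤ d(q) ≤ ⌈(n-3)/2⌉`. -/
theorem degree_bound_of_no_hamiltonian_path {V : Type*} [Fintype V] (G : SimpleGraph V)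
    (n : ℕ) (hn : 4 ≤ n) (hcard : Fintype.card V = n)
    (p : Fin (n - 1) → V) (q : V)
    (hinj : Function.Injective p) (hq : q ∉ Set.range p)
    (hpath : ∀ (i : ℕ) (h : i + 1 < n - 1),
      G.Adj (p ⟨i, by omega⟩) (p ⟨i + 1, h⟩))
    (hconn : G.Connected)
    (h1 : G.pathNum (n - 1) = 2) (h2 : G.pathNum n = 0) :
    2 ≤ (G.neighborSet q).ncard ∧ (G.neighborSet q).ncard ≤ (n - 3 + 1) / 2 := by
  classical
  have hsurj : ∀ x, x ≠ q → x ∈ Set.range p := by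
    intro x hx
    by_contra hxr
    have hle := Finset.card_le_univ (insert q (insert x (Finset.univ.image p)))
    rw [Finset.card_insert_of_notMem (by simpa [hx.symm] using hq),
      Finset.card_insert_of_notMem (by simpa using hxr),
      Finset.card_image_of_injective _ hinj, Finset.card_univ, Fintype.card_fin, hcard] at hle
    omega
  constructor
  · by_contra! hlt
    obtain ⟨v, hvq, hsub⟩ : ∃ v, v ≠ q ∧ G.neighborSet q ⊆ {v} := by
      rcases (G.neighborSet q).eq_empty_or_nonempty with hempty | ⟨v, hv⟩
      · exact ⟨p ⟨0, by omega⟩, fun h => hq ⟨_, h⟩, by simp [hempty]⟩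
      · exact ⟨v, SimpleGraph.Adj.ne' hv, fun y hy =>
          (Set.ncard_le_one (Set.toFinite _)).mp (by omega) y hy v hv⟩
    have := (SimpleGraph.isPathVertexCover_singleton hvq hsub (by omega)).pathNum_le_s17
    rw [hcard, h1, Finset.card_singleton] at this
    omega
  · have hins := fun k => SimpleGraph.length_lt_of_insert_of_pathNum_eq_zero (G := G) (k := k)
      (by rwa [Nat.sub_add_cancel (by omega)]) hinj hq hpath
    set A : Finset (Fin (n - 1)) := Finset.univ.filter fun i => G.Adj q (p i) with hA
    have hN : G.neighborSet q = ↑(A.image p) := by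
      ext x
      simp only [SimpleGraph.mem_neighborSet, hA, Finset.coe_image, Finset.coe_filter,
        Finset.mem_univ, true_and, Set.mem_image, Set.mem_ofPred_eq]
      constructor
      · intro hx
        obtain ⟨i, rfl⟩ := hsurj x hx.ne'
        exact ⟨i, hx, rfl⟩
      · rintro ⟨i, hi, rfl⟩
        exact hi
    rw [hN, Set.ncard_coe_finset, Finset.card_image_of_injective _ hinj,
      ← Finset.card_image_of_injective A Fin.val_injective]
    have hmem : ∀ i, i ∈ A.image Fin.val ↔ ∃ h : i < n - 1, G.Adj q (p ⟨i, h⟩) := by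
      intro i
      simp only [hA, Finset.mem_image, Finset.mem_filter, Finset.mem_univ, true_and]
      exact ⟨by rintro ⟨j, hj, rfl⟩; exact ⟨j.2, hj⟩, fun ⟨h, hj⟩ => ⟨⟨i, h⟩, hj, rfl⟩⟩
    have := Finset.two_mul_card_le_of_no_consecutive (A := A.image Fin.val) (m := n - 2) ?_ ?_ ?_
    · omega
    · rw [hmem]
      rintro ⟨h, hadj⟩
      have := hins 0 (by simp) (by rintro ⟨i, hi⟩ rfl; exact hadj)
      omega
    · intro i hi
      obtain ⟨h, hadj⟩ := (hmem i).mp hi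
      by_contra! hge
      have := hins (i + 1) (fun j hj => by
        obtain rfl : j = ⟨i, h⟩ := Fin.ext (by simpa using hj)
        exact hadj) (fun j hj => by have := j.2; omega)
      omega
    · intro i hi hi'
      obtain ⟨h, hadj⟩ := (hmem i).mp hi
      obtain ⟨h', hadj'⟩ := (hmem (i + 1)).mp hi'
      have := hins (i + 1) (fun j hj => by
        obtain rfl : j = ⟨i, h⟩ := Fin.ext (by simpa using hj)
        exact hadj) (fun j hj => by
        obtain rfl : j = ⟨i + 1, h'⟩ := Fin.ext hj
        exact hadj')
      omega
end

section
/- Let G be a simple graph on n vertices with 3 ≤ n ≤ 7 and let k be an integer with 2 ≤ k < n. If ψ_k(G) = n − k + 1, then ψ_j(G) = n − j + 1 for every j with k < j ≤ n. -/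
namespace SimpleGraph

variable {V : Type*} {G : SimpleGraph V}

/-- `G` has a path whose vertex set is exactly `T` (given as a list of vertices). -/
def TraceableOn (G : SimpleGraph V) (T : Finset V) : Prop :=
  ∃ l : List V, l.Nodup ∧ (∀ x, x ∈ l ↔ x ∈ T) ∧ l.IsChain G.Adj

theorem length_eq_card_of_nodup {l : List V} {T : Finset V} (hl : l.Nodup)
    (hT : ∀ x, x ∈ l ↔ x ∈ T) : l.length = T.card := by
  classical
  rw [← List.toFinset_card_of_nodup hl]
  congr 1
  ext x
  simp [hT]

/-- Inserting a missing vertex between two parts of a path. -/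
theorem TraceableOn.of_append [DecidableEq V] {T : Finset V} {v : V} (hv : v ∈ T) {s t : List V}
    (hn : (s ++ t).Nodup) (hm : ∀ x, x ∈ s ++ t ↔ x ∈ T.erase v)
    (hc : (s ++ t).IsChain G.Adj) (hs : ∀ x ∈ s.getLast?, G.Adj v x)
    (ht : ∀ x ∈ t.head?, G.Adj v x) : G.TraceableOn T := by
  have hvn : v ∉ s ++ t := by simp [hm]
  refine ⟨s ++ v :: t, ?_, fun x => ?_, ?_⟩
  · rw [List.nodup_middle, List.nodup_cons]
    exact ⟨hvn, hn⟩
  · have := hm x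
    grind
  · rw [List.isChain_append] at hc ⊢
    refine ⟨hc.1, List.isChain_cons.2 ⟨ht, hc.2.1⟩, ?_⟩
    rintro x hx y hy
    obtain rfl : v = y := by simpa using hy
    exact (hs x hx).symm

/-- If a vertex `v` cannot be inserted into a path on at most six vertices, then it has at most
two neighbours on this path. -/
theorem exists_neighbors_subset_pair [DecidableEq V] {T : Finset V} {v : V} (hv : v ∈ T)
    (h2 : 2 ≤ T.card) (h7 : T.card ≤ 7) (hT : ¬ G.TraceableOn T)
    (h : G.TraceableOn (T.erase v)) :
    ∃ x ∈ T.erase v, ∃ y ∈ T.erase v, ∀ w ∈ T, G.Adj v w → w = x ∨ w = y := by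
  obtain ⟨l, hn, hm, hc⟩ := h
  have hlen := length_eq_card_of_nodup hn hm
  rw [Finset.card_erase_of_mem hv] at hlen
  have key : ∀ s t : List V, l = s ++ t → (∀ x ∈ s.getLast?, G.Adj v x) →
      (∀ x ∈ t.head?, G.Adj v x) → False := by
    rintro s t rfl hs ht
    exact hT (.of_append hv hn hm hc hs ht)
  suffices H : ∃ x ∈ l, ∃ y ∈ l, ∀ w ∈ l, G.Adj v w → w = x ∨ w = y by
    obtain ⟨x, hx, y, hy, H⟩ := H
    refine ⟨x, (hm x).1 hx, y, (hm y).1 hy, fun w hw hvw => H w ?_ hvw⟩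
    exact (hm w).2 (Finset.mem_erase.2 ⟨hvw.ne', hw⟩)
  have hfst := key [] l
  have hlst := key l []
  clear hm hc hn
  rcases l with _ | ⟨a, _ | ⟨b, _ | ⟨c, _ | ⟨d, _ | ⟨e, _ | ⟨f, _ | ⟨g, l⟩⟩⟩⟩⟩⟩⟩
  · simp at hlen; omega
  · exact ⟨a, by simp, a, by simp, by simp⟩
  · exact ⟨a, by simp, b, by simp, by simp⟩
  · exact ⟨a, by simp, b, by simp, by simp at *; tauto⟩
  · exact ⟨b, by simp, c, by simp, by simp at *; tauto⟩
  · have hbc := key [a, b] [c, d, e]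
    by_cases hb : G.Adj v b
    · exact ⟨b, by simp, d, by simp, by simp at *; tauto⟩
    · exact ⟨c, by simp, d, by simp, by simp at *; tauto⟩
  · have hbc := key [a, b] [c, d, e, f]
    have hde := key [a, b, c, d] [e, f]
    by_cases hb : G.Adj v b <;> by_cases hd : G.Adj v d
    · exact ⟨b, by simp, d, by simp, by simp at *; tauto⟩
    · exact ⟨b, by simp, e, by simp, by simp at *; tauto⟩
    · exact ⟨c, by simp, d, by simp, by simp at *; tauto⟩
    · exact ⟨c, by simp, e, by simp, by simp at *; tauto⟩
  · simp at hlen; omega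

theorem TraceableOn.exists_adj {T : Finset V} (h : G.TraceableOn T) (h2 : 2 ≤ T.card) {v : V}
    (hv : v ∈ T) : ∃ w ∈ T, G.Adj v w := by
  obtain ⟨l, hn, hm, hc⟩ := h
  have hlen := length_eq_card_of_nodup hn hm
  obtain ⟨s, t, rfl⟩ := List.append_of_mem ((hm v).2 hv)
  rw [List.isChain_append, List.isChain_cons] at hc
  rcases t with _ | ⟨y, t⟩
  · rcases List.eq_nil_or_concat s with rfl | ⟨s, x, rfl⟩
    · simp at hlen; omega
    · exact ⟨x, (hm x).1 (by simp), (hc.2.2 x (by simp) v (by simp)).symm⟩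
  · exact ⟨y, (hm y).1 (by simp), hc.2.1.1 y (by simp)⟩

/-- A vertex with only one neighbour on a path is an end of the path, so the path can be extended
beyond it. -/
theorem TraceableOn.of_unique_neighbor [DecidableEq V] {T : Finset V} {v x y : V} (hx : x ∈ T)
    (hv : v ∈ T.erase x) (hvx : G.Adj v x) (h : G.TraceableOn (T.erase x))
    (huniq : ∀ w ∈ T.erase x, G.Adj v w → w = y) : G.TraceableOn T := by
  obtain ⟨l, hn, hm, hc⟩ := h
  obtain ⟨s, t, rfl⟩ := List.append_of_mem ((hm v).2 hv)
  rcases t with _ | ⟨b, t⟩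
  · exact .of_append (s := s ++ [v]) (t := []) hx (by simpa using hn) (by simpa using hm)
      (by simpa using hc) (by simpa using hvx.symm) (by simp)
  rcases List.eq_nil_or_concat s with rfl | ⟨s, a, rfl⟩
  · exact .of_append (s := []) (t := v :: b :: t) hx hn hm hc (by simp) (by simpa using hvx.symm)
  · rw [List.isChain_append, List.isChain_cons] at hc
    have ha := huniq a ((hm a).1 (by simp)) (hc.2.2 a (by simp) v (by simp)).symm
    have hb := huniq b ((hm b).1 (by simp)) (hc.2.1.1 b (by simp))
    subst ha hb
    simp [List.nodup_append] at hn

/-- There is no hypotraceable graph with at least three and at most seven vertices. -/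
theorem TraceableOn.of_forall_erase [DecidableEq V] {T : Finset V} (h3 : 3 ≤ T.card)
    (h7 : T.card ≤ 7) (h : ∀ v ∈ T, G.TraceableOn (T.erase v)) : G.TraceableOn T := by
  by_contra hT
  obtain ⟨v, hv⟩ : T.Nonempty := Finset.card_pos.1 (by omega)
  obtain ⟨x, hx, y, hy, hxy⟩ := exists_neighbors_subset_pair hv (by omega) h7 hT (h v hv)
  rw [Finset.mem_erase] at hx hy
  have hvx : v ∈ T.erase x := Finset.mem_erase.2 ⟨hx.1.symm, hv⟩
  have hvy : v ∈ T.erase y := Finset.mem_erase.2 ⟨hy.1.symm, hv⟩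
  have huniq : ∀ w ∈ T.erase x, G.Adj v w → w = y := fun w hw hvw =>
    (hxy w (Finset.mem_of_mem_erase hw) hvw).resolve_left (Finset.ne_of_mem_erase hw)
  have hadj : G.Adj v x := by
    obtain ⟨w, hw, hvw⟩ := (h y hy.2).exists_adj
      (by rw [Finset.card_erase_of_mem hy.2]; omega) hvy
    rw [← (hxy w (Finset.mem_of_mem_erase hw) hvw).resolve_right (Finset.ne_of_mem_erase hw)]
    exact hvw
  exact hT (.of_unique_neighbor hx.2 hvx hadj (h x hx.2) huniq)

/-- A finite set is a `k`-path vertex cover iff no `k`-subset avoiding it carries a path. -/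
theorem isPathVertexCover_iff_traceableOn {k : ℕ} (hk : 1 ≤ k) (S : Set V) :
    G.IsPathVertexCover k S ↔
      ∀ T : Finset V, T.card = k → G.TraceableOn T → ∃ x ∈ T, x ∈ S := by
  classical
  constructor
  · rintro h T hT ⟨l, hn, hm, hc⟩
    have hlen := length_eq_card_of_nodup hn hm
    have hne : l ≠ [] := by
      rintro rfl
      simp at hlen
      omega
    obtain ⟨x, hx, hxS⟩ := h (Walk.ofSupport l hne hc)
      ((Walk.isPath_def _).2 (by simpa using hn)) (by rw [Walk.support_ofSupport]; omega)
    exact ⟨x, (hm x).1 (by simpa using hx), hxS⟩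
  · intro h u w p hp hlen
    obtain ⟨x, hx, hxS⟩ := h p.support.toFinset
      (by rw [List.toFinset_card_of_nodup hp.support_nodup, hlen])
      ⟨p.support, hp.support_nodup, by simp, p.isChain_adj_support⟩
    exact ⟨x, by simpa using hx, hxS⟩

theorem pathNum_eq_iff_forall_traceableOn [Fintype V] (G : SimpleGraph V) {k : ℕ} (hk : 1 ≤ k)
    (hkn : k ≤ Fintype.card V) :
    G.pathNum k = Fintype.card V - k + 1 ↔ ∀ T : Finset V, T.card = k → G.TraceableOn T := by
  classical
  constructor
  · intro h T hT
    by_contra hnot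
    have hle : G.pathNum k ≤ Fintype.card V - k := by
      refine Nat.sInf_le ⟨Tᶜ, (isPathVertexCover_iff_traceableOn hk _).2 fun U hU hUt => ?_, ?_⟩
      · by_contra! hcon
        have hsub : U ⊆ T := fun x hx => by simpa using hcon x hx
        exact hnot (Finset.eq_of_subset_of_card_le hsub (by omega) ▸ hUt)
      · rw [Finset.card_compl, hT]
    omega
  · intro h
    have hmem : Fintype.card V - k + 1 ∈
        {m : ℕ | ∃ S : Finset V, G.IsPathVertexCover k ↑S ∧ S.card = m} := by
      obtain ⟨S, -, hS⟩ := Finset.exists_subset_card_eq (s := (Finset.univ : Finset V))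
        (n := Fintype.card V - k + 1) (by rw [Finset.card_univ]; omega)
      refine ⟨S, (isPathVertexCover_iff_traceableOn hk _).2 fun U hU _ => ?_, hS⟩
      by_contra! hcon
      have hsub : U ⊆ Sᶜ := fun x hx => by simpa using hcon x hx
      have := Finset.card_le_card hsub
      rw [Finset.card_compl] at this
      omega
    refine le_antisymm (Nat.sInf_le hmem) (le_csInf ⟨_, hmem⟩ ?_)
    rintro m ⟨S, hS, rfl⟩
    by_contra! hlt
    obtain ⟨T, hTS, hT⟩ := Finset.exists_subset_card_eq (s := Sᶜ) (n := k)
      (by rw [Finset.card_compl]; omega)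
    obtain ⟨x, hxT, hxS⟩ := (isPathVertexCover_iff_traceableOn hk _).1 hS T hT (h T hT)
    exact Finset.mem_compl.1 (hTS hxT) hxS

end SimpleGraph

theorem psi_cascade_small_graphs {V : Type*} [Fintype V] (G : SimpleGraph V)
    (hn3 : 3 ≤ Fintype.card V) (hn7 : Fintype.card V ≤ 7)
    (k : ℕ) (hk2 : 2 ≤ k) (hkn : k < Fintype.card V)
    (h : G.pathNum k = Fintype.card V - k + 1) :
    ∀ j : ℕ, k < j → j ≤ Fintype.card V →
      G.pathNum j = Fintype.card V - j + 1 := by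
  classical
  intro j hkj hjn
  rw [G.pathNum_eq_iff_forall_traceableOn (by omega) hkn.le] at h
  rw [G.pathNum_eq_iff_forall_traceableOn (by omega) hjn]
  clear hjn
  induction j, hkj.le using Nat.le_induction with
  | base => exact h
  | succ j hj ih =>
    have hstep : ∀ T : Finset V, T.card = j → G.TraceableOn T := by
      rcases hj.eq_or_lt with rfl | hlt
      · exact h
      · exact ih hlt
    intro T hT
    have hle := T.card_le_univ
    refine .of_forall_erase (by omega) (by omega) fun v hv => hstep _ ?_
    rw [Finset.card_erase_of_mem hv, hT, Nat.add_sub_cancel]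
end
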